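/- arXiv:1906.09131 — 2 statements merged into one kernel-verified Lean document; each statement's English description precedes it below -/
import Mathlib

section
/- The satisfiability problem for the intersection of the fluted fragment with the two-variable guarded fragment is undecidable in the presence of three distinguished transitive relations; the same problem is undecidable when the three distinguished relations are instead required to be equivalence relations. -/
/- STATEMENT 15: Satisfiability of sentences in the intersection of the fluted
fragment and the two-variable guarded fragment is undecidable with three transitive
relations, and likewise with three equivalence relations. -/

namespace FlutedThreeTrans

/-- FL² formulas over countably many unary predicates (indexed by `ℕ`) and three
distinguished binary predicates (indexed by `Fin 3`); the index `m ≤ 2` records that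
the free variables form a suffix of `x₁, …, x_m`, all atoms ending at the last
variable, and only the last variable may be quantified. -/
inductive F : ℕ → Type
  | patom (p : ℕ) {m : ℕ} (h1 : 1 ≤ m) (h2 : m ≤ 2) : F m
  | batom (k : Fin 3) : F 2
  | fls {m : ℕ} (h : m ≤ 2) : F m
  | not {m : ℕ} (φ : F m) : F m
  | and {m : ℕ} (φ ψ : F m) : F m
  | or {m : ℕ} (φ ψ : F m) : F m
  | imp {m : ℕ} (φ ψ : F m) : F m
  | ex {m : ℕ} (h : m ≤ 1) (φ : F (m + 1)) : F m
  | all {m : ℕ} (h : m ≤ 1) (φ : F (m + 1)) : F m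

/-- A structure interpreting the unary predicates and the three distinguished binary
predicates. -/
structure Str (A : Type) where
  U : ℕ → A → Prop
  T : Fin 3 → A → A → Prop

def Sat {A : Type} (M : Str A) : ∀ {m : ℕ}, F m → (Fin m → A) → Prop
  | m, .patom p h1 _, v => M.U p (v ⟨m - 1, by omega⟩)
  | _, .batom k, v => M.T k (v 0) (v 1)
  | _, .fls _, _ => False
  | _, .not φ, v => ¬ Sat M φ v
  | _, .and φ ψ, v => Sat M φ v ∧ Sat M ψ v
  | _, .or φ ψ, v => Sat M φ v ∨ Sat M ψ v
  | _, .imp φ ψ, v => Sat M φ v → Sat M ψ v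
  | _, .ex _ φ, v => ∃ a : A, Sat M φ (Fin.snoc v a)
  | _, .all _ φ, v => ∀ a : A, Sat M φ (Fin.snoc v a)

/-- `φ` has a model in which all three distinguished binary relations are
transitive. -/
def Satisfiable (φ : F 0) : Prop :=
  ∃ (A : Type) (_ : Nonempty A) (M : Str A),
    (∀ k, Transitive (M.T k)) ∧ Sat M φ (fun i => i.elim0)

/-- A concrete Gödel numbering of FL²3T-formulas. -/
def encode : ∀ {m : ℕ}, F m → ℕ
  | _, .patom p _ _ => Nat.pair 0 p
  | _, .batom k => Nat.pair 1 k.val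
  | _, .fls _ => Nat.pair 2 0
  | _, .not φ => Nat.pair 3 (encode φ)
  | _, .and φ ψ => Nat.pair 4 (Nat.pair (encode φ) (encode ψ))
  | _, .or φ ψ => Nat.pair 5 (Nat.pair (encode φ) (encode ψ))
  | _, .imp φ ψ => Nat.pair 6 (Nat.pair (encode φ) (encode ψ))
  | _, .ex _ φ => Nat.pair 7 (encode φ)
  | _, .all _ φ => Nat.pair 8 (encode φ)


/-- The variable `x₁` occurs (free) in a formula with free variables among
`x₁, x₂`.  (Formulas of index 2 are quantifier-free.) -/
def UsesVar1 : F 2 → Prop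
  | .batom _ => True
  | .not φ => UsesVar1 φ
  | .and φ ψ => UsesVar1 φ ∨ UsesVar1 ψ
  | .or φ ψ => UsesVar1 φ ∨ UsesVar1 ψ
  | .imp φ ψ => UsesVar1 φ ∨ UsesVar1 ψ
  | _ => False

/-- Atomic formulas with free variable `x₁`. -/
def IsAtom1 (φ : F 1) : Prop :=
  ∃ p h1 h2, φ = F.patom p h1 h2

/-- Atomic formulas with free variables among `x₁, x₂`. -/
def IsAtom2 (φ : F 2) : Prop :=
  (∃ p h1 h2, φ = F.patom p h1 h2) ∨ ∃ k, φ = F.batom k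

/-- Atomic formulas featuring the variable `x₁` (binary atoms). -/
def IsBatom (φ : F 2) : Prop :=
  ∃ k, φ = F.batom k

/-- Membership in the guarded fragment GF²: all quantification is of the form
`∃x₂(α ∧ ψ)` or `∀x₂(α → ψ)` (resp. `∃x₁(α ∧ ψ)`, `∀x₁(α → ψ)`) where `α` is an atom
featuring all free variables of `ψ` (in particular the quantified variable). -/
inductive Guarded : ∀ {m : ℕ}, F m → Prop
  | patom {m : ℕ} (p : ℕ) (h1 : 1 ≤ m) (h2 : m ≤ 2) : Guarded (F.patom p h1 h2)
  | batom (k : Fin 3) : Guarded (F.batom k)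
  | fls {m : ℕ} (h : m ≤ 2) : Guarded (F.fls h)
  | not {m : ℕ} {φ : F m} : Guarded φ → Guarded (F.not φ)
  | and {m : ℕ} {φ ψ : F m} : Guarded φ → Guarded ψ → Guarded (F.and φ ψ)
  | or {m : ℕ} {φ ψ : F m} : Guarded φ → Guarded ψ → Guarded (F.or φ ψ)
  | imp {m : ℕ} {φ ψ : F m} : Guarded φ → Guarded ψ → Guarded (F.imp φ ψ)
  | ex0 {h : 0 ≤ 1} {α χ : F 1} : IsAtom1 α → Guarded χ →
      Guarded (F.ex h (F.and α χ))
  | all0 {h : 0 ≤ 1} {α χ : F 1} : IsAtom1 α → Guarded χ →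
      Guarded (F.all h (F.imp α χ))
  | ex1 {h : 1 ≤ 1} {α χ : F 2} : IsAtom2 α → Guarded χ →
      (UsesVar1 χ → IsBatom α) → Guarded (F.ex h (F.and α χ))
  | all1 {h : 1 ≤ 1} {α χ : F 2} : IsAtom2 α → Guarded χ →
      (UsesVar1 χ → IsBatom α) → Guarded (F.all h (F.imp α χ))

/-- `φ` has a model in which the three distinguished binary relations are equivalence
relations. -/
def SatisfiableEquiv (φ : F 0) : Prop :=
  ∃ (A : Type) (_ : Nonempty A) (M : Str A),
    (∀ k, Equivalence (M.T k)) ∧ Sat M φ (fun i => i.elim0)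

/-! The undecidable source problem is the halting problem for automata that sweep back and forth
over a word, reversing direction at its ends and growing it by one cell per sweep; they simulate
Turing machines. A run is a sequence of events, each the reading or the writing of a cell. The
sentence says that every event has a successor, and it has to force a cell to be read with the
letter last written into it, although the two events may lie arbitrarily far apart.

The events are coloured by their column modulo 3, and consecutive events are linked by two of the
three relations, determined by the colour and the direction of the sweep. Then transitivity along
the run carries one of these links from the writing of a cell to its next reading; matching the two
colours recovers the column, and the guarded sentence, whose guard is this link, can compare the two
letters and demand a second link, which keeps the invariant alive.

Conversely, a run drawn in the plane gives a model in which the relations are equivalences. The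
points are partitioned in three ways into bricks, three columns wide and two rows high, the bricks
of the `k`-th partition being centred on the columns congruent to `k`. The bricks are small enough
for no two events to be linked by accident: if a writing event and a reading event of the same
residue lie in a common brick centred on a neighbouring column, then they concern the same cell at
consecutive visits. -/

/-! ### Turing machines with undecidable halting problem -/

section HaltingProblem

open Turing

-- The machine receives `2 ^ n` in place of `n`: the binary digits of `2 ^ n` form an obviously
-- primitive recursive word, while those of `n` would need a separate argument.
theorem primrec_two_pow : Primrec fun k : ℕ => 2 ^ k :=
  (Primrec.nat_rec₁ 1 (Primrec.nat_mul.comp Primrec.snd (Primrec.const 2)).to₂).of_eq fun n => by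
    induction n with
    | zero => rfl
    | succ n ih => rw [pow_succ, ← ih]

theorem rfind_two_pow_eq (n : ℕ) :
    (Nat.rfind fun k => Part.some (decide (2 ^ k = 2 ^ n))) = Part.some n :=
  Part.eq_some_iff.2 <| Nat.mem_rfind.2
    ⟨by simp, fun {m} hm => by simpa using hm.ne⟩

theorem exists_code_eval_two_pow_dom {f : ℕ →. ℕ} (hf : Partrec f) :
    ∃ c : ToPartrec.Code, ∀ n, (c.eval [2 ^ n]).Dom ↔ (f n).Dom := by
  have hlog : Partrec fun m : ℕ => Nat.rfind fun k => Part.some (decide (2 ^ k = m)) :=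
    Partrec.rfind <| Computable₂.partrec₂ <| Primrec₂.to_comp <|
      (Primrec.eq.comp (primrec_two_pow.comp Primrec.snd) Primrec.fst).decide.to₂
  obtain ⟨c, hc⟩ := ToPartrec.Code.exists_code
    (Nat.Partrec'.part_iff₁.2 (hlog.bind (hf.comp Computable.snd).to₂))
  refine ⟨c, fun n => ?_⟩
  have heval := hc (2 ^ n ::ᵥ List.Vector.nil)
  rw [List.Vector.head_cons, rfind_two_pow_eq, Part.bind_some] at heval
  exact iff_of_eq (congrArg Part.Dom heval)

theorem trNat_two_pow (n : ℕ) : PartrecToTM2.trNat (2 ^ n) =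
    List.replicate n PartrecToTM2.Γ'.bit0 ++ [PartrecToTM2.Γ'.bit1] := by
  suffices h : ∃ p : PosNum, ((2 ^ n : ℕ) : Num) = Num.pos p ∧ PartrecToTM2.trPosNum p =
      List.replicate n PartrecToTM2.Γ'.bit0 ++ [PartrecToTM2.Γ'.bit1] by
    obtain ⟨p, hnum, htr⟩ := h
    rw [PartrecToTM2.trNat, hnum, PartrecToTM2.trNum, htr]
  induction n with
  | zero => exact ⟨PosNum.one, by simp; rfl, rfl⟩
  | succ n ih =>
    obtain ⟨p, hnum, htr⟩ := ih
    refine ⟨p.bit0, ?_, by simp [PartrecToTM2.trPosNum, htr, List.replicate_succ]⟩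
    rw [pow_succ, mul_two, Nat.cast_add, hnum, Num.bit0_of_bit0]
    rfl

theorem exists_finite_machine {Γ Λ : Type} [Inhabited Γ] [Inhabited Λ] (M : TM0.Machine Γ Λ)
    {S : Set Λ} (hfin : S.Finite) (hS : TM0.Supports M S) :
    ∃ (Q : Type) (_ : Inhabited Q) (_ : Finite Q) (M' : TM0.Machine Γ Q),
      ∀ l, (TM0.eval M' l).Dom ↔ (TM0.eval M l).Dom := by
  classical
  let base : Inhabited S := ⟨⟨default, hS.1⟩⟩
  let idΓ : PointedMap Γ Γ := ⟨id, rfl⟩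
  let retract : PointedMap Λ S :=
    ⟨fun q => if h : q ∈ S then ⟨q, h⟩ else default, by simp [hS.1]; rfl⟩
  refine ⟨S, base, hfin, M.map idΓ idΓ retract Subtype.val, fun l => ?_⟩
  refine StateTransition.tr_eval_dom
    (TM0.Machine.map_respects M idΓ idΓ retract Subtype.val hS (fun _ => rfl) fun q hq => ?_)
    (a₁ := TM0.init l) (a₂ := TM0.init l) ⟨hS.1, ?_⟩
  · exact congrArg Subtype.val (dif_pos hq)
  · rw [TM0.map_init idΓ retract l]
    exact congrArg TM0.init (List.map_id l)

/-- The tape alphabet of the single-tape machine simulating the stack machine of a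
`ToPartrec.Code`. -/
abbrev StackCell : Type := TM2to1.Γ' PartrecToTM2.K' fun _ => PartrecToTM2.Γ'

/-- The set of stacks of the machine simulating a `ToPartrec.Code` is finite. -/
instance instFintypeStacks : Fintype PartrecToTM2.K' :=
  ⟨{.main, .rev, .aux, .stack}, fun k => by cases k <;> simp⟩

theorem exists_machine_eval_dom (c : ToPartrec.Code) :
    ∃ (Q : Type) (_ : Inhabited Q) (_ : Finite Q) (M : TM0.Machine StackCell Q), ∀ v,
      (TM0.eval M (TM2to1.trInit .main (PartrecToTM2.trList v))).Dom ↔ (c.eval v).Dom := by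
  let base : Inhabited PartrecToTM2.Λ' := ⟨PartrecToTM2.trNormal c .halt⟩
  obtain ⟨Q, hQ, hfin, M, hM⟩ := exists_finite_machine _ (Finset.finite_toSet _) <|
    TM1to0.tr_supports _ (TM2to1.tr_supports _ (PartrecToTM2.tr_supports c .halt))
  refine ⟨Q, hQ, hfin, M, fun v => (hM _).trans ?_⟩
  have hinit : TM2.init .main (PartrecToTM2.trList v) = PartrecToTM2.init c v :=
    congrArg (TM2.Cfg.mk _ _) (funext fun k => by cases k <;> rfl)
  have heval : TM2.eval PartrecToTM2.tr .main (PartrecToTM2.trList v) = _ :=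
    congrArg (Part.map _) ((congrArg _ hinit).trans (PartrecToTM2.tr_eval c v))
  rw [TM1to0.tr_eval]
  exact (TM2to1.tr_eval_dom _ _ _).trans (iff_of_eq (congrArg Part.Dom heval))

theorem nonempty_primcodable (α : Type*) [Finite α] : Nonempty (Primcodable α) :=
  let ⟨n, ⟨e⟩⟩ := Finite.exists_equiv_fin α
  ⟨Primcodable.ofEquiv (Fin n) e⟩

theorem primrec_replicate {α : Type*} [Primcodable α] (a : α) :
    Primrec fun n : ℕ => List.replicate n a :=
  (Primrec.list_map Primrec.list_range (Primrec.const a).to₂).of_eq fun n => by simp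

theorem primrec_trInit_two_pow [Primcodable StackCell] : Primrec fun n : ℕ =>
    (TM2to1.trInit .main (PartrecToTM2.trList [2 ^ n]) : List StackCell) := by
  let cell (top : Bool) (a : PartrecToTM2.Γ') : StackCell :=
    (top, Function.update (fun _ => none) .main (some a))
  have hword (n : ℕ) : TM2to1.trInit .main (PartrecToTM2.trList [2 ^ n]) =
      cell true .cons :: cell false .bit1 :: List.replicate n (cell false .bit0) := by
    rw [TM2to1.trInit, PartrecToTM2.trList, PartrecToTM2.trList, trNat_two_pow,
      List.append_assoc, List.reverse_append, List.reverse_replicate]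
    exact congrArg (cell true .cons :: cell false .bit1 :: ·) List.map_replicate
  exact (Primrec.list_cons.comp (Primrec.const _) <| Primrec.list_cons.comp (Primrec.const _) <|
    primrec_replicate (cell false .bit0)).of_eq fun n => (hword n).symm

theorem exists_machine_halting_not_computablePred :
    ∃ (Γ Q : Type) (_ : Inhabited Γ) (_ : Inhabited Q) (_ : Finite Γ) (_ : Finite Q)
      (_ : Primcodable Γ) (M : TM0.Machine Γ Q),
      ¬ ComputablePred fun l : List Γ => (TM0.eval M l).Dom := by
  obtain ⟨c, hc⟩ := exists_code_eval_two_pow_dom <|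
    Nat.Partrec.Code.eval_part.comp (Computable.ofNat Nat.Partrec.Code) (Computable.const 0)
  obtain ⟨Q, _, _, M, hM⟩ := exists_machine_eval_dom c
  obtain ⟨_⟩ := nonempty_primcodable StackCell
  refine ⟨_, Q, inferInstance, ‹_›, inferInstance, ‹_›, ‹_›, M, fun h =>
    ComputablePred.halting_problem 0 (ComputablePred.computable_of_manyOneReducible
      ⟨_, primrec_trInit_two_pow.to_comp.comp Computable.encode, fun code => ?_⟩ h)⟩
  rw [hM, hc, Denumerable.ofNat_encode]

end HaltingProblem

/-! ### Sweeping automata -/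

/-- A sweeping automaton rewrites a word from one end to the other, turns around after appending
one new cell, and sweeps back. In state `s`, reading `x`, it halts if `step s x = none` and
otherwise rewrites `x` and changes state as prescribed by `step s x`; at the end of the word it
appends the cell `(turn s).1` and starts the next sweep in state `(turn s).2`. -/
structure Sweeper (α σ : Type) where
  step : σ → α → Option (α × σ)
  turn : σ → α × σ

namespace Sweeper

/-- A configuration of a sweeping automaton: its state, the cells already rewritten in the current
sweep (last one first), and the cells still to be read (next one first). -/
structure Cfg (α σ : Type) where
  state : σ
  done : List α
  todo : List α

variable {α σ : Type}

/-- One move of a sweeping automaton; `none` means that it halts. -/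
def next (M : Sweeper α σ) : Cfg α σ → Option (Cfg α σ)
  | ⟨s, xs, []⟩ => some ⟨(M.turn s).2, [], (M.turn s).1 :: xs⟩
  | ⟨s, xs, y :: ys⟩ => (M.step s y).map fun p => ⟨p.2, p.1 :: xs, ys⟩

section OfTM0

open Turing StateTransition

variable {Γ Q : Type}

/-- The opposite direction. -/
def flip : Dir → Dir
  | .left => .right
  | .right => .left

theorem flip_eq_of_ne {d e : Dir} (h : e ≠ d) : flip d = e := by
  cases d <;> cases e <;> trivial

variable [Inhabited Γ]

/-- The tape with scanned symbol `γ`, the word `ahead` on its side `d` and the word `behind` on its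
other side, both listed starting at the head. -/
def tape (d : Dir) (γ : Γ) (behind ahead : List Γ) : Tape Γ :=
  match d with
  | .right => ⟨γ, .mk behind, .mk ahead⟩
  | .left => ⟨γ, .mk ahead, .mk behind⟩

theorem tape_flip (d : Dir) (γ : Γ) (a b : List Γ) : tape (flip d) γ a b = tape d γ b a := by
  cases d <;> rfl

theorem tape_concat_default (d : Dir) (γ : Γ) (a b : List Γ) :
    tape d γ a (b ++ [default]) = tape d γ a b := by
  have h : ListBlank.mk (b ++ [default]) = ListBlank.mk b :=
    Quotient.sound' (.inr ⟨1, rfl⟩)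
  cases d <;> simp only [tape, h]

theorem move_tape (d : Dir) (γ : Γ) (a b : List Γ) :
    (tape d γ a b).move d = tape d b.headI (γ :: a) b.tail := by
  cases d <;> rfl

theorem tape_head (d : Dir) (γ : Γ) (a b : List Γ) : (tape d γ a b).head = γ := by
  cases d <;> rfl

theorem write_tape (d : Dir) (γ γ' : Γ) (a b : List Γ) :
    (tape d γ a b).write γ' = tape d γ' a b := by
  cases d <;> rfl

variable [Inhabited Q]

/-- The sweeping automaton simulating a Turing machine. The cell under the head of the machine
carries the machine's state. The automaton remembers the direction of the current sweep and, if the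
head has just moved in this direction, the state to be put down on the next cell; a move against
the direction of the sweep is left to the next sweep. -/
def ofTM0 (M : TM0.Machine Γ Q) : Sweeper (Γ × Option Q) (Dir × Option Q) where
  step
    | (d, q), (γ, none) => some ((γ, q), (d, none))
    | (d, _), (γ, some q) => (M q γ).map fun
      | (q', .write γ') => ((γ', some q'), (d, none))
      | (q', .move e) => if e = d then ((γ, none), (d, some q')) else ((γ, some q), (d, none))
  turn | (d, q) => ((default, q), (flip d, none))

/-- The cell containing `γ` and not scanned by the head. -/
def unmarked (γ : Γ) : Γ × Option Q := (γ, none)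

/-- The configuration of `ofTM0 M` which is about to read the cell scanned by the machine, in a
sweep in direction `d`. -/
def atHead (d : Dir) (q : Q) (γ : Γ) (behind ahead : List Γ) :
    Cfg (Γ × Option Q) (Dir × Option Q) :=
  ⟨(d, none), behind.map unmarked, (γ, some q) :: ahead.map unmarked⟩

/-- The relation between configurations of the machine and of its simulation in a sweep in
direction `d`. -/
def Simulates (d : Dir) (c : TM0.Cfg Γ Q) (C : Cfg (Γ × Option Q) (Dir × Option Q)) : Prop :=
  ∃ γ behind ahead, c.Tape = tape d γ behind ahead ∧ C = atHead d c.q γ behind ahead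

variable (M : TM0.Machine Γ Q)

theorem reaches_turn (d : Dir) (r : List (Γ × Option Q)) (b : List Γ) :
    Reaches₁ (ofTM0 M).next ⟨(d, none), r, b.map unmarked⟩
      ⟨(flip d, none), (b ++ [default]).map unmarked, r⟩ := by
  have sweep (d : Dir) (b : List Γ) : ∀ r s : List (Γ × Option Q), Reaches (ofTM0 M).next
      ⟨(d, none), r, b.map unmarked ++ s⟩ ⟨(d, none), (b.reverse.map unmarked) ++ r, s⟩ := by
    induction b with
    | nil => exact fun r s => .refl
    | cons γ b ih =>
      intro r s
      rw [List.reverse_cons, List.map_append, List.append_assoc]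
      exact .head rfl (ih (unmarked γ :: r) s)
  have forth := sweep d b r []
  have back := sweep (flip d) (default :: b.reverse) [] r
  rw [List.append_nil] at forth
  rw [List.reverse_cons, List.reverse_reverse, List.append_nil] at back
  exact .trans_right forth (.head' rfl back)

theorem reaches_simulates_flip {d : Dir} {c : TM0.Cfg Γ Q}
    {C : Cfg (Γ × Option Q) (Dir × Option Q)} (hC : Simulates d c C) {q' : Q} {e : Dir}
    (hM : M c.q c.Tape.head = some (q', .move e)) (he : e ≠ d) :
    ∃ C', Simulates (flip d) c C' ∧ Reaches₁ (ofTM0 M).next C C' := by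
  obtain ⟨γ, a, b, hT, rfl⟩ := hC
  rw [hT, tape_head] at hM
  refine ⟨_, ⟨γ, b ++ [default], a, ?_, rfl⟩, .head ?_ (reaches_turn M d _ b)⟩
  · rw [hT, tape_flip, tape_concat_default]
  · simp [next, ofTM0, hM, he, atHead]

theorem reaches_simulates_move {d : Dir} {c : TM0.Cfg Γ Q}
    {C : Cfg (Γ × Option Q) (Dir × Option Q)} (hC : Simulates d c C) {q' : Q}
    (hM : M c.q c.Tape.head = some (q', .move d)) :
    ∃ C', Simulates (flip d) ⟨q', c.Tape.move d⟩ C' ∧ Reaches₁ (ofTM0 M).next C C' := by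
  obtain ⟨γ, a, b, hT, rfl⟩ := hC
  rw [hT, tape_head] at hM
  have hnext : (ofTM0 M).next (atHead d c.q γ a b) =
      some ⟨(d, some q'), (γ :: a).map unmarked, b.map unmarked⟩ := by
    simp [next, ofTM0, hM, atHead, unmarked]
  rw [hT, move_tape]
  cases b with
  | nil => exact ⟨_, ⟨default, [], γ :: a, (tape_flip ..).symm, rfl⟩, .head hnext (.single rfl)⟩
  | cons x b =>
    refine ⟨_, ⟨x, b ++ [default], γ :: a, ?_, rfl⟩, .head hnext (.head rfl (reaches_turn M d _ b))⟩
    rw [tape_flip, tape_concat_default]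
    rfl

theorem reaches_simulates_write {d : Dir} {c : TM0.Cfg Γ Q}
    {C : Cfg (Γ × Option Q) (Dir × Option Q)} (hC : Simulates d c C) {q' : Q} {γ' : Γ}
    (hM : M c.q c.Tape.head = some (q', .write γ')) :
    ∃ C', Simulates (flip d) ⟨q', c.Tape.write γ'⟩ C' ∧ Reaches₁ (ofTM0 M).next C C' := by
  obtain ⟨γ, a, b, hT, rfl⟩ := hC
  rw [hT, tape_head] at hM
  refine ⟨_, ⟨γ', b ++ [default], a, ?_, rfl⟩, .head ?_ (reaches_turn M d _ b)⟩
  · rw [hT, write_tape, tape_flip, tape_concat_default]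
  · simp [next, ofTM0, hM, atHead]

theorem ofTM0_respects :
    Respects (TM0.step M) (ofTM0 M).next fun c C => ∃ d, Simulates d c C := by
  rintro c C ⟨d, hC⟩
  rcases hM : M c.q c.Tape.head with _ | ⟨q', e | γ'⟩
  · obtain ⟨γ, a, b, hT, rfl⟩ := hC
    rw [hT, tape_head] at hM
    simp [TM0.step, hT, tape_head, hM, next, ofTM0, atHead]
  · simp only [TM0.step, hM, Option.map_some]
    by_cases he : e = d
    · subst he
      obtain ⟨C', hC', hr⟩ := reaches_simulates_move M hC hM
      exact ⟨C', ⟨_, hC'⟩, hr⟩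
    · obtain ⟨C', hC', hr⟩ := reaches_simulates_flip M hC hM he
      obtain rfl := flip_eq_of_ne he
      obtain ⟨C'', hC'', hr'⟩ := reaches_simulates_move M hC' hM
      exact ⟨C'', ⟨_, hC''⟩, hr.trans hr'⟩
  · simp only [TM0.step, hM, Option.map_some]
    obtain ⟨C', hC', hr⟩ := reaches_simulates_write M hC hM
    exact ⟨C', ⟨_, hC'⟩, hr⟩

theorem eval_ofTM0_dom (l : List Γ) :
    (eval (ofTM0 M).next (atHead .right default l.headI [] l.tail)).Dom ↔ (TM0.eval M l).Dom :=
  tr_eval_dom (ofTM0_respects M) ⟨.right, _, _, _, rfl, rfl⟩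

end OfTM0

end Sweeper

/-! ### Local rules and their soundness -/

/-- What a cell, once written, tells the cell visited next: nothing (the cell was not written last
or belongs to the initial word), to be read in state `s` in the same sweep (`last` if there is no
cell left to read in this sweep), or to start the next sweep in state `s`. -/
inductive Signal (σ : Type) where
  | still
  | go (last : Bool) (s : σ)
  | turn (s : σ)
  deriving Fintype

/-- The event at a point of the space-time diagram of a sweeping automaton: a cell is either read in
state `s` or written. Letters carry a flag telling whether the cell is the last one in the sweep
reading it; at the end of the word `none` is read. The flag `first` marks the beginning of a sweep,
where the cell written will be the last one in the sweep reading it. -/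
inductive Mark (α σ : Type) where
  | read (x : Option (α × Bool)) (s : σ) (first : Bool)
  | write (x : α × Bool) (signal : Signal σ)
  deriving Fintype

/-- An event together with the residue `col` of its column and the direction `dir`, `1` or `-1`, of
the sweep to which it belongs. -/
structure Tile (α σ : Type) where
  col : ZMod 3
  dir : ZMod 3
  mark : Mark α σ
  deriving Fintype

namespace Tile

variable {α σ : Type}

/-- The residue of the first relation leading to the point visited next. -/
def link₁ : Tile α σ → ZMod 3
  | ⟨c, d, .write _ (.turn _)⟩ => c + d
  | ⟨c, _, _⟩ => c

/-- The residue of the second relation leading to the point visited next. -/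
def link₂ : Tile α σ → ZMod 3
  | ⟨c, d, .write _ (.turn _)⟩ => c - d
  | ⟨c, d, _⟩ => c + d

/-- The event determines a next one. -/
def IsActive (τ : Tile α σ) : Prop :=
  ∀ x, τ.mark ≠ .write x .still

end Tile

/-- The word as seen by the sweep reading it: its first letter, with the information whether this is
also the last one. -/
def flaggedHead {α : Type} : List α → Option (α × Bool)
  | [] => none
  | x :: xs => some (x, xs.isEmpty)

namespace Sweeper

variable {α σ A : Type} (M : Sweeper α σ)

/-- The configurations from which the automaton runs forever. -/
def Diverges (C : Cfg α σ) : Prop :=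
  ¬ (StateTransition.eval M.next C).Dom

/-- The relation between consecutive events of a run. -/
def Succ : Tile α σ → Tile α σ → Prop
  | ⟨c, d, .read (some (x, last)) s first⟩, τ =>
    ∃ y s', M.step s x = some (y, s') ∧ τ = ⟨c + d, d, .write (y, first) (.go last s')⟩
  | ⟨c, d, .read none s first⟩, τ =>
    τ = ⟨c + d, d, .write ((M.turn s).1, first) (.turn (M.turn s).2)⟩
  | ⟨c, d, .write _ (.go last s)⟩, τ =>
    ∃ x : Option (α × Bool), x.isNone = last ∧ τ = ⟨c + d, d, .read x s false⟩
  | ⟨c, d, .write x (.turn s)⟩, τ => τ = ⟨c, -d, .read (some x) s true⟩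
  | ⟨_, _, .write _ .still⟩, _ => False

/-- The local constraints on the events of a run, placed on points connected by three relations:
each event is linked to the next one by two of the relations, and a cell linked by one relation to a
reading event of its own column is the cell being read, in which case a second relation holds as
well. -/
structure Rules (U : Tile α σ → A → Prop) (T : ZMod 3 → A → A → Prop) : Prop where
  succ : ∀ ⦃τ a⦄, τ.IsActive → U τ a →
    ∃ b τ', T τ.link₁ a b ∧ T τ.link₂ a b ∧ M.Succ τ τ' ∧ U τ' b
  match_read : ∀ ⦃c d d' : ZMod 3⦄ ⦃x signal x' s first a b⦄, U ⟨c, d, .write x signal⟩ a →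
    U ⟨c, d', .read (some x') s first⟩ b → T (c + d) a b → x = x' ∧ T (c - d) a b

section Soundness

variable (U : Tile α σ → A → Prop) (T : ZMod 3 → A → A → Prop)

/-- The letters of the word are written in the cells preceding the point `a` in a sweep in direction
`d`, each linked to its successor, starting with the cell in column `c + d = c - 2 * d` modulo 3. -/
def Trail (d : ZMod 3) : ZMod 3 → A → List α → Prop
  | _, _, [] => True
  | c, a, x :: xs => ∃ b signal, U ⟨c + d, d, .write (x, xs.isEmpty) signal⟩ b ∧ T (c - d) b a ∧
      Trail d (c + d) b xs

/-- The point `b` is a reading event in the given configuration of a run: the cells to its left were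
written in the current sweep, the cells to its right in the preceding one. -/
def Represents (b : A) (C : Cfg α σ) : Prop :=
  ∃ c d, U ⟨c, d, .read (flaggedHead C.todo) C.state C.done.isEmpty⟩ b ∧
    Trail U T d (c + d) b C.done ∧
    ∀ x xs, C.todo = x :: xs → ∃ a signal, U ⟨c, -d, .write (x, xs.isEmpty) signal⟩ a ∧
      T (c + d) a b ∧ T (c - d) a b ∧ Trail U T (-d) c a xs

variable {U T}

theorem add_add_eq_sub (c d : ZMod 3) : c + d + d = c - d := by
  decide +revert

theorem sub_sub_eq_add (c d : ZMod 3) : c - d - d = c + d := by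
  decide +revert

variable {M}

theorem Rules.exists_represents_turn (h : M.Rules U T) {c d : ZMod 3} {a : A} {x : α}
    {xs : List α} {s : σ} (ha : U ⟨c, d, .write (x, xs.isEmpty) (.turn s)⟩ a)
    (hxs : Trail U T d c a xs) : ∃ b, Represents U T b ⟨s, [], x :: xs⟩ := by
  obtain ⟨b, τ, h₁, h₂, rfl, hb⟩ := h.succ (by simp [Tile.IsActive]) ha
  refine ⟨b, c, -d, hb, trivial, ?_⟩
  rintro _ _ ⟨⟩
  rw [neg_neg, ← sub_eq_add_neg, sub_neg_eq_add]
  exact ⟨a, _, ha, h₂, h₁, hxs⟩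

variable [∀ k, IsTrans A (T k)]

theorem Trail.extend {d c : ZMod 3} {a b : A} {xs : List α}
    (h : Trail U T d c a xs) (hab : T (c - d) a b) : Trail U T d c b xs := by
  cases xs with
  | nil => trivial
  | cons x xs =>
    obtain ⟨a', signal, hU, ha, h⟩ := h
    exact ⟨a', signal, hU, _root_.trans ha hab, h⟩

theorem Rules.exists_represents_of_todo_nil (h : M.Rules U T) {b : A}
    {s : σ} {xs : List α} (hb : Represents U T b ⟨s, xs, []⟩) :
    ∃ b', Represents U T b' ⟨(M.turn s).2, [], (M.turn s).1 :: xs⟩ := by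
  obtain ⟨c, d, hread, hdone, -⟩ := hb
  obtain ⟨a, τ, h₁, -, rfl, ha⟩ := h.succ (by simp [Tile.IsActive]) hread
  exact h.exists_represents_turn ha (hdone.extend (by simpa [Tile.link₁] using h₁))

theorem Rules.exists_represents_of_todo_cons (h : M.Rules U T) {b : A}
    {s : σ} {xs ys : List α} {x : α} (hb : Represents U T b ⟨s, xs, x :: ys⟩) :
    ∃ y s', M.step s x = some (y, s') ∧ ∃ b', Represents U T b' ⟨s', y :: xs, ys⟩ := by
  obtain ⟨c, d, hread, hdone, htodo⟩ := hb
  obtain ⟨a, -, -, hab, -, htrail⟩ := htodo x ys rfl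
  obtain ⟨w, τ, h₁, h₂, ⟨y, s', hstep, rfl⟩, hw⟩ := h.succ (by simp [Tile.IsActive]) hread
  obtain ⟨b', τ, h₃, h₄, ⟨z, hz, rfl⟩, hb'⟩ := h.succ (by simp [Tile.IsActive]) hw
  simp only [Tile.link₁, Tile.link₂, add_add_eq_sub] at h₁ h₂ h₃ h₄ hb'
  refine ⟨y, s', hstep, b', c - d, d, ?_⟩
  simp only [sub_add_cancel, sub_sub_eq_add]
  have hdone' : Trail U T d c b' (y :: xs) :=
    ⟨w, _, hw, h₄, hdone.extend (by simpa using h₁)⟩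
  cases ys with
  | nil =>
    obtain rfl : z = none := by simpa using hz
    exact ⟨hb', hdone', by simp⟩
  | cons x' ys =>
    obtain ⟨a', signal, ha', haa, htrail⟩ := htrail
    obtain ⟨z, rfl⟩ := Option.isSome_iff_exists.1 (by simpa using hz : z.isSome = true)
    rw [← sub_eq_add_neg] at ha' htrail
    rw [sub_neg_eq_add] at haa
    have ha'b' : T (c + d) a' b' := _root_.trans haa (_root_.trans hab (_root_.trans h₂ h₃))
    obtain ⟨rfl, h₅⟩ := h.match_read ha' hb' (by rwa [← sub_eq_add_neg, sub_sub_eq_add])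
    refine ⟨hb', hdone', ?_⟩
    rintro _ _ ⟨⟩
    exact ⟨a', signal, ha', by simpa using h₅, ha'b', htrail⟩

theorem Rules.exists_represents_next (h : M.Rules U T) {b : A} {C : Cfg α σ}
    (hb : Represents U T b C) : ∃ C', M.next C = some C' ∧ ∃ b', Represents U T b' C' := by
  obtain ⟨s, xs, _ | ⟨x, ys⟩⟩ := C
  · exact ⟨_, rfl, h.exists_represents_of_todo_nil hb⟩
  · obtain ⟨y, s', hstep, hb'⟩ := h.exists_represents_of_todo_cons hb
    exact ⟨_, by simp [next, hstep], hb'⟩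

theorem Rules.diverges (h : M.Rules U T) {b : A} {C : Cfg α σ} (hb : Represents U T b C) :
    M.Diverges C := by
  intro hdom
  obtain ⟨hreach, hhalt⟩ := StateTransition.mem_eval.1 (Part.get_mem hdom)
  have hinv : ∃ b', Represents U T b' ((StateTransition.eval M.next C).get hdom) := by
    generalize (StateTransition.eval M.next C).get hdom = D at hreach
    induction hreach with
    | refl => exact ⟨b, hb⟩
    | tail _ hnext ih =>
      obtain ⟨b', hb'⟩ := ih
      obtain ⟨C', hC', hrep⟩ := h.exists_represents_next hb'
      rwa [Option.some.inj (hnext.symm.trans hC')]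
  obtain ⟨b', hb'⟩ := hinv
  obtain ⟨C', hC', -⟩ := h.exists_represents_next hb'
  cases hhalt.symm.trans hC'

end Soundness
end Sweeper

namespace Sweeper

variable {α σ : Type}

/-- An infinite run on the word `w`, arranged by sweeps: `row t` is the word read by sweep `t`,
in reading order, and `state t q` is the state after reading `q` letters in this sweep. -/
structure Run (M : Sweeper α σ) (s : σ) (w : List α) where
  row : ℕ → ℕ → α
  state : ℕ → ℕ → σ
  row_zero : ∀ q (h : q < w.length), row 0 q = w[q]
  state_zero : state 0 0 = s
  step_eq : ∀ t q, q < w.length + t → M.step (state t q) (row t q) =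
    some (row (t + 1) (w.length + t - q), state t (q + 1))
  turn_eq : ∀ t, M.turn (state t (w.length + t)) = (row (t + 1) 0, state (t + 1) 0)

variable {M : Sweeper α σ}

theorem Diverges.exists_next {C : Cfg α σ} (h : M.Diverges C) :
    ∃ C', M.next C = some C' ∧ M.Diverges C' := by
  rcases hC : M.next C with _ | C'
  · exact (h (Part.dom_iff_mem.2 ⟨C, StateTransition.mem_eval.2 ⟨.refl, hC⟩⟩)).elim
  · refine ⟨C', rfl, ?_⟩
    rwa [Diverges, StateTransition.reaches_eval (.single hC)] at h

theorem Diverges.exists_sweep {s : σ} {xs ys : List α} (h : M.Diverges ⟨s, xs, ys⟩) :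
    ∃ (state : ℕ → σ) (zs : List α), state 0 = s ∧ zs.length = ys.length ∧
      (∀ q (hy : q < ys.length) (hz : q < zs.length),
        M.step (state q) ys[q] = some (zs[q], state (q + 1))) ∧
      M.Diverges ⟨state ys.length, zs.reverse ++ xs, []⟩ := by
  induction ys generalizing s xs with
  | nil => exact ⟨fun _ => s, [], rfl, rfl, by simp, h⟩
  | cons y ys ih =>
    obtain ⟨C', hC', hdiv⟩ := h.exists_next
    obtain ⟨⟨z, s'⟩, hstep, rfl⟩ := Option.map_eq_some_iff.1 hC'
    obtain ⟨state, zs, rfl, hlen, hsteps, hdiv⟩ := ih hdiv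
    refine ⟨fun | 0 => s | q + 1 => state q, z :: zs, rfl, congrArg (· + 1) hlen, ?_, ?_⟩
    · rintro (_ | q) hy hz
      · exact hstep
      · exact hsteps q (Nat.lt_of_succ_lt_succ hy) (Nat.lt_of_succ_lt_succ hz)
    · simpa using hdiv

theorem Diverges.exists_next_sweep {s : σ} {w : List α} (h : M.Diverges ⟨s, [], w⟩) :
    ∃ (state : ℕ → σ) (s' : σ) (w' : List α), state 0 = s ∧ ∃ hlen : w'.length = w.length + 1,
      (∀ q (hq : q < w.length),
        M.step (state q) w[q] = some (w'[w.length - q], state (q + 1))) ∧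
      M.turn (state w.length) = (w'[0], s') ∧ M.Diverges ⟨s', [], w'⟩ := by
  obtain ⟨state, zs, hs, hlen, hstep, hdiv⟩ := h.exists_sweep
  obtain ⟨_, ⟨⟩, hdiv⟩ := hdiv.exists_next
  refine ⟨state, _, _, hs, by simp [hlen], fun q hq => ?_, rfl, hdiv⟩
  rw [hstep q hq (hlen ▸ hq)]
  obtain ⟨k, hk⟩ := Nat.exists_eq_add_of_lt hq
  have hindex : zs.length - 1 - k = q := by omega
  simp [hk, add_assoc, hindex]

theorem Diverges.nonempty_run {s : σ} {w : List α} (hw : w ≠ []) (h : M.Diverges ⟨s, [], w⟩) :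
    Nonempty (M.Run s w) := by
  choose state s' w' hstate hlen hstep hturn hdiv using
    fun p : {p : σ × List α // M.Diverges ⟨p.1, [], p.2⟩} => p.2.exists_next_sweep
  let sweep : ℕ → {p : σ × List α // M.Diverges ⟨p.1, [], p.2⟩} :=
    fun t => (fun p => ⟨(s' p, w' p), hdiv p⟩)^[t] ⟨(s, w), h⟩
  have sweep_succ (t : ℕ) : sweep (t + 1) = ⟨(s' (sweep t), w' (sweep t)), hdiv (sweep t)⟩ :=
    Function.iterate_succ_apply' ..
  have length_sweep (t : ℕ) : (sweep t).1.2.length = w.length + t := by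
    induction t with
    | zero => rfl
    | succ t ih => rw [sweep_succ, hlen, ih, add_assoc]
  refine ⟨fun t q => (sweep t).1.2.getD q (w.head hw), fun t => state (sweep t),
    fun q hq => List.getD_eq_getElem _ _ hq, hstate _, fun t q hq => ?_, fun t => ?_⟩
  · have hq' : q < (sweep t).1.2.length := by rwa [length_sweep]
    rw [sweep_succ, List.getD_eq_getElem _ _ hq', hstep _ q hq', ← length_sweep,
      List.getD_eq_getElem]
  · rw [sweep_succ, ← length_sweep, hturn, hstate, List.getD_eq_getElem]

end Sweeper

/-! ### Bricks -/

section Bricks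

/-- The column congruent to `k` modulo 3 among `x - 1`, `x` and `x + 1`. -/
def center (k : ZMod 3) (x : ℤ) : ℤ := x + (k - x).valMinAbs

/-- The brick of residue `k` containing the point `(t, x)`. The bricks of residue `k` are the
rectangles consisting of three columns, the middle one in the residue class of `k`, and two rows;
vertically, those around even columns are shifted by one against those around odd columns. -/
def brick (k : ZMod 3) (p : ℤ × ℤ) : ℤ × ℤ :=
  (center k p.2, (p.1 + center k p.2 + 1) / 2)

/-- Lying in the same brick of residue `k`. -/
def SameBrick (k : ZMod 3) (p p' : ℤ × ℤ) : Prop :=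
  brick k p = brick k p'

theorem sameBrick_equivalence (k : ZMod 3) : Equivalence (SameBrick k) :=
  eq_equivalence.comap (brick k)

theorem center_eq {c x : ℤ} (h : |c - x| ≤ 1) : center c x = c := by
  have hval : ((c - x : ℤ) : ZMod 3).valMinAbs = c - x := by
    rw [ZMod.valMinAbs_spec]
    rw [abs_le] at h
    exact ⟨rfl, by constructor <;> push_cast <;> omega⟩
  rw [center, ← Int.cast_sub, hval, add_sub_cancel]

theorem abs_center_sub_le (k : ZMod 3) (x : ℤ) : |center k x - x| ≤ 1 := by
  rw [center, add_sub_cancel_left]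
  generalize k - x = j
  decide +revert

theorem sameBrick_row (t : ℤ) {c x x' : ℤ} (h : |c - x| ≤ 1) (h' : |c - x'| ≤ 1) :
    SameBrick c (t, x) (t, x') := by
  simp only [SameBrick, brick, center_eq h, center_eq h']

theorem sameBrick_column {t c x : ℤ} (h : |c - x| ≤ 1) (hodd : Odd (t + c)) :
    SameBrick c (t, x) (t + 1, x) := by
  obtain ⟨m, hm⟩ := hodd
  simp only [SameBrick, brick, center_eq h, Prod.mk.injEq, true_and]
  omega

theorem sameBrick_add_left (t x : ℤ) {d : ℤ} (hd : |d| ≤ 1) : SameBrick x (t, x) (t, x + d) :=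
  sameBrick_row t (by simp) (by simpa using hd)

theorem sameBrick_add_right (t x : ℤ) {d : ℤ} (hd : |d| ≤ 1) :
    SameBrick (x + d) (t, x) (t, x + d) := by
  exact_mod_cast sameBrick_row t (c := x + d) (by simpa using hd) (by simp)

theorem sameBrick_above {t x d : ℤ} (hd : d = 1 ∨ d = -1) (heven : Even (t + x)) :
    SameBrick (x + d) (t, x) (t + 1, x) := by
  have hodd : Odd (t + (x + d)) := by
    rw [← add_assoc]
    exact heven.add_odd (by rcases hd with rfl | rfl <;> decide)
  exact_mod_cast sameBrick_column (by rcases hd with rfl | rfl <;> simp) hodd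

theorem SameBrick.eq_of_cast_eq {t t' x x' d : ℤ} (hd : d = 1 ∨ d = -1)
    (hx : Even (t + x)) (hx' : Even (t' + x')) (hcast : (x : ZMod 3) = x')
    (h : SameBrick (x + d) (t, x) (t' + 1, x')) : t = t' ∧ x = x' := by
  have hc : center (x + d) x = x + d := by
    exact_mod_cast center_eq (c := x + d) (by rcases hd with rfl | rfl <;> simp)
  have hc' := abs_center_sub_le (x + d) x'
  simp only [SameBrick, brick, hc, Prod.mk.injEq] at h
  obtain ⟨hcol, hrow⟩ := h
  rw [← hcol, abs_le] at hc'
  rw [← hcol] at hrow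
  obtain ⟨m, hm⟩ := hx
  obtain ⟨m', hm'⟩ := hx'
  obtain ⟨j, hj⟩ := (ZMod.intCast_eq_intCast_iff_dvd_sub x x' 3).1 hcast
  push_cast at hj
  omega

end Bricks

/-! ### Runs in the plane -/

namespace Sweeper

section Columns

/-- The direction of sweep `t`. -/
def heading (t : ℕ) : ℤ := (-1) ^ t

theorem heading_succ (t : ℕ) : heading (t + 1) = -heading t := by
  rw [heading, pow_succ, mul_neg_one, heading]

theorem heading_eq_or (t : ℕ) : heading t = 1 ∨ heading t = -1 :=
  neg_one_pow_eq_or ℤ t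

theorem abs_heading (t : ℕ) : |heading t| = 1 :=
  abs_neg_one_pow t

theorem neg_heading_eq_or (t : ℕ) : -heading t = 1 ∨ -heading t = -1 :=
  heading_succ t ▸ heading_eq_or (t + 1)

/-- The column in which sweep `t` over a word of initial length `n` begins. -/
def start (n : ℕ) : ℕ → ℤ
  | 0 => 2 - 2 * n
  | t + 1 => start n t + (2 * (n + t) + 1) * heading t

/-- The column of the cell read in position `q` of sweep `t`, for a word of initial length `n`. -/
def column (n t q : ℕ) : ℤ := start n t + 2 * q * heading t

theorem column_zero (n q : ℕ) : column n 0 q = 2 - 2 * n + 2 * q := by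
  simp [column, start, heading]

theorem column_add_one (n t q : ℕ) : column n t (q + 1) = column n t q + 2 * heading t := by
  simp only [column]
  push_cast
  ring

theorem column_succ {n t q : ℕ} (hq : q ≤ n + t) :
    column n (t + 1) (n + t - q) = column n t q + heading t := by
  simp only [column, start, heading_succ, Nat.cast_sub hq]
  push_cast
  ring

theorem column_sub {n t q : ℕ} (hq : q < n + t) :
    column n t (n + t - q) = column n (t + 1) (q + 1) + heading t := by
  obtain ⟨k, hk⟩ := Nat.exists_eq_add_of_lt hq
  have hsucc := column_succ (n := n) (t := t) (q := k) (by omega)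
  have hindex : n + t - k = q + 1 := by omega
  have hindex' : n + t - q = k + 1 := by omega
  rw [hindex] at hsucc
  rw [hindex', hsucc, column_add_one]
  ring

theorem even_add_column (n t q : ℕ) : Even (t + column n t q) := by
  have hstart : Even (t + start n t) := by
    induction t with
    | zero => exact ⟨1 - n, by rw [start]; push_cast; ring⟩
    | succ t ih =>
      obtain ⟨m, hm⟩ := ih
      rcases heading_eq_or t with h | h <;> rw [start, h]
      · exact ⟨m + n + t + 1, by push_cast; linarith⟩
      · exact ⟨m - n - t, by push_cast; linarith⟩
  rw [column, ← add_assoc, mul_assoc]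
  exact hstart.add (even_two_mul _)

theorem column_injective (n t : ℕ) : Function.Injective (column n t) := by
  intro q q' h
  simp only [column] at h
  rcases heading_eq_or t with ht | ht <;> rw [ht] at h <;> omega

theorem intCast_neg_two_mul (k : ℤ) : ((-2 * k : ℤ) : ZMod 3) = k :=
  (ZMod.intCast_eq_intCast_iff_dvd_sub _ _ 3).2 ⟨k, by push_cast; ring⟩

end Columns

namespace Run

variable {α σ : Type} {M : Sweeper α σ} {s : σ} {w : List α} (R : M.Run s w)

/-- The cell in position `q` of sweep `t`, flagged if it is the last one. -/
def cell (t q : ℕ) : α × Bool := (R.row t q, decide (q + 1 = w.length + t))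

/-- The signal sent by the cell in position `q` of sweep `t` when it has been written. Except for
`q = 0`, it has been written by sweep `t - 1` in position `w.length + t - 1 - q`. -/
def signal : ℕ → ℕ → Signal σ
  | t, 0 => .turn (R.state t 0)
  | 0, _ + 1 => .still
  | t + 1, q + 1 => .go (decide (q = 0)) (R.state t (w.length + t - q))

/-- The event of writing the cell in position `q` of sweep `t`. -/
def writeTile (t q : ℕ) : Tile α σ :=
  ⟨column w.length t q, -heading t, .write (R.cell t q) (R.signal t q)⟩

/-- The event of reading position `q` in sweep `t`. -/
def readTile (t q : ℕ) : Tile α σ :=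
  ⟨column w.length t q, heading t,
    .read (if q < w.length + t then some (R.cell t q) else none) (R.state t q) (decide (q = 0))⟩

/-- The events of the run, placed in the plane: those before sweep `t` in row `t`. -/
inductive Placed : Tile α σ → ℤ × ℤ → Prop
  | write (t q : ℕ) (hq : q < w.length + t) : Placed (R.writeTile t q) (t, column w.length t q)
  | read (t q : ℕ) (hq : q ≤ w.length + t) : Placed (R.readTile t q) (t + 1, column w.length t q)

/-- The given event, placed at the given point, is followed by another one in the run. -/
def HasSucc (τ : Tile α σ) (p : ℤ × ℤ) : Prop :=
  ∃ p' τ', SameBrick τ.link₁ p p' ∧ SameBrick τ.link₂ p p' ∧ M.Succ τ τ' ∧ R.Placed τ' p'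

theorem writeTile_succ_of_lt {t q : ℕ} (hq : q < w.length + t) :
    R.writeTile (t + 1) (w.length + t - q) =
      ⟨column w.length t q + heading t, heading t, .write
        (R.row (t + 1) (w.length + t - q), decide (q = 0))
        (.go (decide (q + 1 = w.length + t)) (R.state t (q + 1)))⟩ := by
  obtain ⟨k, hk⟩ := Nat.exists_eq_add_of_lt hq
  have hindex : w.length + t - q = k + 1 := by omega
  have hstate : w.length + t - k = q + 1 := by omega
  have hfirst : k + 1 + 1 = w.length + (t + 1) ↔ q = 0 := by omega
  have hlast : k = 0 ↔ q + 1 = w.length + t := by omega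
  rw [writeTile, column_succ hq.le, heading_succ, hindex, cell, signal, hstate]
  simp only [hfirst, hlast]
  push_cast
  rw [neg_neg]

theorem writeTile_succ_zero (t : ℕ) :
    R.writeTile (t + 1) 0 =
      ⟨column w.length t (w.length + t) + heading t, heading t, .write
        (R.row (t + 1) 0, decide (w.length + t = 0)) (.turn (R.state (t + 1) 0))⟩ := by
  have hcol := column_succ (le_refl (w.length + t))
  have hfirst : 0 + 1 = w.length + (t + 1) ↔ w.length + t = 0 := by omega
  rw [Nat.sub_self] at hcol
  rw [writeTile, hcol, heading_succ, cell, signal]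
  simp only [hfirst]
  push_cast
  rw [neg_neg]

theorem succ_readTile {t q : ℕ} (hq : q ≤ w.length + t) :
    M.Succ (R.readTile t q) (R.writeTile (t + 1) (w.length + t - q)) := by
  rcases hq.lt_or_eq with hlt | rfl
  · rw [readTile, if_pos hlt]
    exact ⟨_, _, R.step_eq t q hlt, R.writeTile_succ_of_lt hlt⟩
  · rw [readTile, if_neg (lt_irrefl _), Nat.sub_self, writeTile_succ_zero]
    simp only [Succ, R.turn_eq]

theorem hasSucc_readTile {t q : ℕ} (hq : q ≤ w.length + t) :
    R.HasSucc (R.readTile t q) (t + 1, column w.length t q) := by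
  have hplaced := Placed.write (R := R) (t + 1) (w.length + t - q) (by omega)
  rw [column_succ hq, Nat.cast_succ] at hplaced
  exact ⟨_, _, sameBrick_add_left _ _ (abs_heading t).le,
    sameBrick_add_right _ _ (abs_heading t).le, R.succ_readTile hq, hplaced⟩

theorem hasSucc_writeTile_turn {t : ℕ} (h : 0 < w.length + t) :
    R.HasSucc (R.writeTile t 0) (t, column w.length t 0) := by
  have heven := even_add_column w.length t 0
  have h₁ := sameBrick_above (neg_heading_eq_or t) heven
  have h₂ := sameBrick_above (heading_eq_or t) heven
  rw [Int.cast_neg] at h₁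
  refine ⟨_, R.readTile t 0, ?_, ?_, ?_, .read t 0 h.le⟩
  · simpa only [writeTile, signal, Tile.link₁] using h₁
  · simpa only [writeTile, signal, Tile.link₂, sub_neg_eq_add] using h₂
  · simp only [Succ, writeTile, readTile, signal, if_pos h, neg_neg, decide_true]

theorem hasSucc_writeTile_go {t q : ℕ} (hq : q < w.length + t) :
    R.HasSucc (R.writeTile (t + 1) (q + 1))
      ((t + 1 : ℕ), column w.length (t + 1) (q + 1)) := by
  have hcol := column_sub hq
  have hplaced := Placed.read (R := R) t (w.length + t - q) (by omega)
  have hwrite : R.writeTile (t + 1) (q + 1) =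
      ⟨column w.length (t + 1) (q + 1), heading t, .write (R.cell (t + 1) (q + 1))
        (.go (decide (q = 0)) (R.state t (w.length + t - q)))⟩ := by
    rw [writeTile, heading_succ, signal, Int.cast_neg, neg_neg]
  have hread : R.readTile t (w.length + t - q) =
      ⟨column w.length (t + 1) (q + 1) + heading t, heading t,
        .read (if q ≠ 0 then some (R.cell t (w.length + t - q)) else none)
          (R.state t (w.length + t - q)) false⟩ := by
    have hlast : w.length + t - q < w.length + t ↔ q ≠ 0 := by omega
    have hne : w.length + t - q ≠ 0 := by omega
    simp only [readTile, hcol, Int.cast_add, hlast, decide_eq_false hne]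
  rw [hwrite, Nat.cast_succ]
  rw [hread, hcol] at hplaced
  exact ⟨_, _, sameBrick_add_left _ _ (abs_heading t).le,
    sameBrick_add_right _ _ (abs_heading t).le,
    ⟨_, by by_cases hq0 : q = 0 <;> simp [hq0], rfl⟩, hplaced⟩

theorem eq_of_sameBrick {t t' q q' : ℕ}
    (hcol : (column w.length t q : ZMod 3) = column w.length t' q')
    (h : SameBrick (column w.length t q - heading t) (t, column w.length t q)
      (t' + 1, column w.length t' q')) : t = t' ∧ q = q' := by
  rw [sub_eq_add_neg, ← Int.cast_neg] at h
  obtain ⟨ht, hq⟩ :=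
    h.eq_of_cast_eq (neg_heading_eq_or t) (even_add_column ..) (even_add_column ..) hcol
  obtain rfl := Nat.cast_injective ht
  exact ⟨rfl, column_injective _ _ hq⟩

theorem rules : M.Rules R.Placed SameBrick where
  succ := by
    rintro _ _ hactive (⟨t, q, hq⟩ | ⟨t, q, hq⟩)
    · match t, q with
      | t, 0 => exact R.hasSucc_writeTile_turn hq
      | 0, q + 1 => exact (hactive _ rfl).elim
      | t + 1, q + 1 => exact R.hasSucc_writeTile_go (by omega)
    · exact R.hasSucc_readTile hq
  match_read := by
    intro c d d' x signal x' s' first a b ha hb h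
    generalize hτ : (⟨c, d, .write x signal⟩ : Tile α σ) = τ at ha
    generalize hτ' : (⟨c, d', .read (some x') s' first⟩ : Tile α σ) = τ' at hb
    cases ha with
    | read => cases hτ
    | write t q hq =>
      cases hb with
      | write => cases hτ'
      | read t' q' hq' =>
        cases hτ
        simp only [readTile, Tile.mk.injEq, Mark.read.injEq] at hτ'
        obtain ⟨hcol, -, hx', -⟩ := hτ'
        rw [← sub_eq_add_neg] at h
        obtain ⟨rfl, rfl⟩ := eq_of_sameBrick hcol h
        rw [if_pos hq, Option.some.injEq] at hx'
        rw [hx', sub_neg_eq_add]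
        exact ⟨rfl, sameBrick_above (heading_eq_or t) (even_add_column ..)⟩

theorem placed_initial {s : σ} {xs ys : List α} {y : α} (R : M.Run s (xs ++ y :: ys)) :
    R.Placed ⟨ys.length, -1, .write (y, ys.isEmpty) (R.signal 0 xs.length)⟩
      (0, -2 * ys.length) := by
  have hplaced := Placed.write (R := R) 0 xs.length (by simp)
  have hcol : column (xs ++ y :: ys).length 0 xs.length = -2 * ys.length := by
    rw [column_zero, List.length_append, List.length_cons]
    push_cast
    ring
  have hmod : ((-2 * ys.length : ℤ) : ZMod 3) = ys.length :=
    mod_cast intCast_neg_two_mul ys.length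
  have hlast : decide (xs.length + 1 = (xs ++ y :: ys).length + 0) = ys.isEmpty := by
    cases ys <;> simp
  rw [writeTile, hcol, hmod, cell, hlast, R.row_zero _ (by simp)] at hplaced
  simpa [heading] using hplaced

end Run
end Sweeper

/-! ### Guarded formulas -/

section Formulas

variable {A S ι : Type} [Encodable S] {m : ℕ}

namespace F

/-- The atomic formula saying that the last variable satisfies the unary predicate symbol `i`. The
symbols are taken from an arbitrary encodable type. -/
def symbol (i : S) (h : 1 ≤ m := by decide) (hm : m ≤ 2 := by decide) : F m :=
  .patom (Encodable.encode i) h hm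

/-- The atomic formula saying that the two variables are related by the distinguished relation with
index `k`, where `Fin 3` is identified with the definitionally equal `ZMod 3`. -/
def edge (k : ZMod 3) : F 2 :=
  .batom k

/-- The guarded sentence `∃ x₁ (i x₁ ∧ χ x₁)`. -/
def exPred (i : S) (χ : F 1) : F 0 :=
  .ex zero_le_one (.and (.symbol i) χ)

/-- The guarded sentence `∀ x₁ (i x₁ → χ x₁)`. -/
def allPred (i : S) (χ : F 1) : F 0 :=
  .all zero_le_one (.imp (.symbol i) χ)

/-- The guarded formula `∃ x₂ (k x₁ x₂ ∧ χ x₁ x₂)`. -/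
def exEdge (k : ZMod 3) (χ : F 2) : F 1 :=
  .ex le_rfl (.and (.edge k) χ)

/-- The guarded formula `∀ x₂ (k x₁ x₂ → χ x₁ x₂)`. -/
def allEdge (k : ZMod 3) (χ : F 2) : F 1 :=
  .all le_rfl (.imp (.edge k) χ)

/-- The conjunction of a finite family of formulas. -/
noncomputable def conj [Finite ι] (hm : m ≤ 2) (φ : ι → F m) : F m :=
  ((Set.toFinite (Set.range φ)).toFinset.toList).foldr .and (.not (.fls hm))

/-- The disjunction of a finite family of formulas. -/
noncomputable def disj [Finite ι] (hm : m ≤ 2) (φ : ι → F m) : F m :=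
  ((Set.toFinite (Set.range φ)).toFinset.toList).foldr .or (.fls hm)

end F

namespace Str

/-- The interpretation of a unary predicate symbol. -/
def symbol (N : Str A) (i : S) : A → Prop :=
  N.U (Encodable.encode i)

/-- The interpretation of a distinguished relation. -/
def rel (N : Str A) (k : ZMod 3) : A → A → Prop :=
  N.T k

/-- The structure with the given interpretation of the unary symbols and the distinguished
relations. -/
def ofSymbols (V : S → A → Prop) (T : ZMod 3 → A → A → Prop) : Str A where
  U p a := ∃ i, Encodable.encode i = p ∧ V i a
  T := T

theorem symbol_ofSymbols (V : S → A → Prop) (T : ZMod 3 → A → A → Prop) :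
    (ofSymbols V T).symbol = V := by
  ext i a
  simp only [symbol, ofSymbols, Encodable.encode_inj, exists_eq_left]

end Str

section Semantics

variable (N : Str A)

theorem sat_symbol₁ (i : S) (a : A) : Sat N (.symbol i) ![a] ↔ N.symbol i a :=
  Iff.rfl

theorem sat_symbol₂ (i : S) (a b : A) : Sat N (.symbol i) ![a, b] ↔ N.symbol i b :=
  Iff.rfl

theorem sat_edge (k : ZMod 3) (a b : A) : Sat N (.edge k) ![a, b] ↔ N.rel k a b :=
  Iff.rfl

theorem snoc_elim (v : Fin 0 → A) (a : A) : (Fin.snoc v a : Fin 1 → A) = ![a] := by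
  ext i
  fin_cases i
  rfl

theorem sat_exPred (i : S) (χ : F 1) (v : Fin 0 → A) :
    Sat N (.exPred i χ) v ↔ ∃ a, N.symbol i a ∧ Sat N χ ![a] := by
  simp [F.exPred, F.symbol, Str.symbol, Sat, snoc_elim]

theorem sat_allPred (i : S) (χ : F 1) (v : Fin 0 → A) :
    Sat N (.allPred i χ) v ↔ ∀ a, N.symbol i a → Sat N χ ![a] := by
  simp [F.allPred, F.symbol, Str.symbol, Sat, snoc_elim]

theorem sat_exEdge (k : ZMod 3) (χ : F 2) (a : A) :
    Sat N (.exEdge k χ) ![a] ↔ ∃ b, N.rel k a b ∧ Sat N χ ![a, b] := by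
  simp [F.exEdge, Sat, sat_edge]

theorem sat_allEdge (k : ZMod 3) (χ : F 2) (a : A) :
    Sat N (.allEdge k χ) ![a] ↔ ∀ b, N.rel k a b → Sat N χ ![a, b] := by
  simp [F.allEdge, Sat, sat_edge]

theorem sat_conj [Finite ι] (hm : m ≤ 2) (φ : ι → F m) (v : Fin m → A) :
    Sat N (.conj hm φ) v ↔ ∀ i, Sat N (φ i) v := by
  have hlist (l : List (F m)) :
      Sat N (l.foldr .and (.not (.fls hm))) v ↔ ∀ ψ ∈ l, Sat N ψ v := by
    induction l with
    | nil => simp [Sat]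
    | cons ψ l ih => simp [Sat, ih]
  simp [F.conj, hlist]

theorem sat_disj [Finite ι] (hm : m ≤ 2) (φ : ι → F m) (v : Fin m → A) :
    Sat N (.disj hm φ) v ↔ ∃ i, Sat N (φ i) v := by
  have hlist (l : List (F m)) : Sat N (l.foldr .or (.fls hm)) v ↔ ∃ ψ ∈ l, Sat N ψ v := by
    induction l with
    | nil => simp [Sat]
    | cons ψ l ih => simp [Sat, ih]
  simp [F.disj, hlist]

end Semantics

section Guardedness

theorem guarded_exPred (i : S) {χ : F 1} (h : Guarded χ) : Guarded (.exPred i χ) :=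
  .ex0 ⟨_, _, _, rfl⟩ h

theorem guarded_allPred (i : S) {χ : F 1} (h : Guarded χ) : Guarded (.allPred i χ) :=
  .all0 ⟨_, _, _, rfl⟩ h

theorem guarded_exEdge (k : ZMod 3) {χ : F 2} (h : Guarded χ) : Guarded (.exEdge k χ) :=
  .ex1 (.inr ⟨_, rfl⟩) h fun _ => ⟨_, rfl⟩

theorem guarded_allEdge (k : ZMod 3) {χ : F 2} (h : Guarded χ) : Guarded (.allEdge k χ) :=
  .all1 (.inr ⟨_, rfl⟩) h fun _ => ⟨_, rfl⟩

theorem guarded_conj [Finite ι] (hm : m ≤ 2) {φ : ι → F m} (h : ∀ i, Guarded (φ i)) :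
    Guarded (.conj hm φ) := by
  have hlist (l : List (F m)) (hl : ∀ ψ ∈ l, Guarded ψ) :
      Guarded (l.foldr .and (.not (.fls hm))) := by
    induction l with
    | nil => exact .not (.fls hm)
    | cons ψ l ih =>
      rw [List.forall_mem_cons] at hl
      exact .and hl.1 (ih hl.2)
  exact hlist _ (by simpa using h)

theorem guarded_disj [Finite ι] (hm : m ≤ 2) {φ : ι → F m} (h : ∀ i, Guarded (φ i)) :
    Guarded (.disj hm φ) := by
  have hlist (l : List (F m)) (hl : ∀ ψ ∈ l, Guarded ψ) : Guarded (l.foldr .or (.fls hm)) := by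
    induction l with
    | nil => exact .fls hm
    | cons ψ l ih =>
      rw [List.forall_mem_cons] at hl
      exact .or hl.1 (ih hl.2)
  exact hlist _ (by simpa using h)

end Guardedness
end Formulas

/-! ### The reduction -/

section Reduction

variable {α σ : Type}

/-- The unary predicate symbols: the tiles, and one symbol for each cell of the initial word. -/
abbrev Symbol (α σ : Type) : Type :=
  Tile α σ ⊕ ℕ

/-- The symbol that holds at the events with the given tile. -/
abbrev Tile.symbol (τ : Tile α σ) : Symbol α σ :=
  .inl τ

/-- The symbol that holds at the cell of the initial word that is followed by `k` others. -/
abbrev cellSymbol (α σ : Type) (k : ℕ) : Symbol α σ :=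
  .inr k

variable [Encodable (Tile α σ)]

section Row

variable (σ)

/-- The sentence saying that the cell of the initial word before those of `xs` is written with the
letter `x`, silent, and linked to the preceding one. -/
def initialCell (x : α) (xs : List α) : F 0 :=
  .allPred (cellSymbol α σ xs.length) (.and
    (.symbol (Tile.symbol (σ := σ) ⟨xs.length, -1, .write (x, xs.isEmpty) .still⟩))
    (.exEdge (xs.length - 1) (.symbol (cellSymbol α σ (xs.length + 1)))))

/-- The sentence saying that the cells of the initial word exist, and describing those after the
first one, which contain the given list. -/
def initialRow : List α → F 0
  | [] => .exPred (cellSymbol α σ 0) (.symbol (cellSymbol α σ 0))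
  | x :: xs => .and (initialRow xs) (initialCell σ x xs)

variable {σ}

theorem guarded_initialRow (xs : List α) : Guarded (initialRow σ xs) := by
  induction xs with
  | nil => exact guarded_exPred _ (.patom ..)
  | cons x xs ih =>
    exact .and ih (guarded_allPred _ (.and (.patom ..) (guarded_exEdge _ (.patom ..))))

theorem sat_initialRow_cons {A : Type} (N : Str A) (v : Fin 0 → A) (x : α) (xs : List α) :
    Sat N (initialRow σ (x :: xs)) v ↔ Sat N (initialRow σ xs) v ∧ ∀ a,
      N.symbol (cellSymbol α σ xs.length) a →
      N.symbol (Tile.symbol (σ := σ) ⟨xs.length, -1, .write (x, xs.isEmpty) .still⟩) a ∧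
      ∃ b, N.rel (xs.length - 1) a b ∧ N.symbol (cellSymbol α σ (xs.length + 1)) b := by
  simp only [initialRow, initialCell, Sat, sat_allPred, sat_exEdge, sat_symbol₁, sat_symbol₂]

theorem exists_trail_of_sat_initialRow {A : Type} {N : Str A} {v : Fin 0 → A} {xs : List α}
    (h : Sat N (initialRow σ xs) v) : ∃ a, N.symbol (cellSymbol α σ xs.length) a ∧
      Sweeper.Trail (fun τ : Tile α σ => N.symbol τ.symbol) N.rel (-1) xs.length a xs := by
  induction xs with
  | nil =>
    obtain ⟨a, ha, -⟩ := (sat_exPred N _ _ v).1 h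
    exact ⟨a, ha, trivial⟩
  | cons x xs ih =>
    obtain ⟨hrow, hcell⟩ := (sat_initialRow_cons N v x xs).1 h
    obtain ⟨a, ha, htrail⟩ := ih hrow
    obtain ⟨hwrite, b, hab, hb⟩ := hcell a ha
    have hcol : (((x :: xs).length : ℕ) : ZMod 3) + -1 = xs.length := by simp
    have hlink : (((x :: xs).length : ℕ) : ZMod 3) - -1 = xs.length - 1 := by
      rw [← hcol, ← Sweeper.add_add_eq_sub, sub_eq_add_neg]
    refine ⟨b, hb, a, .still, ?_⟩
    rw [hcol, hlink]
    exact ⟨hwrite, hab, htrail⟩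

end Row

namespace Sweeper

section Plane

variable {M : Sweeper α σ}

namespace Run

/-- The plane as a structure describing the given run: the tiles are placed as in `Run.Placed`, the
cells of the initial word are in row 0, and the relations are those of lying in the same brick. -/
def plane {s : σ} {w : List α} (R : M.Run s w) : Str (ℤ × ℤ) :=
  .ofSymbols (S := Symbol α σ) (Sum.elim R.Placed fun k p => p = (0, -2 * (k : ℤ))) SameBrick

theorem symbol_plane_tile {s : σ} {w : List α} (R : M.Run s w) (τ : Tile α σ) :
    R.plane.symbol τ.symbol = R.Placed τ :=
  congrFun (Str.symbol_ofSymbols ..) _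

theorem symbol_plane_cell {s : σ} {w : List α} (R : M.Run s w) (k : ℕ) :
    R.plane.symbol (cellSymbol α σ k) = fun p => p = (0, -2 * (k : ℤ)) :=
  congrFun (Str.symbol_ofSymbols ..) _

theorem sat_initialRow_plane {s : σ} {w xs : List α} {x : α} (R : M.Run s (x :: w))
    (h : xs <:+ w) (v : Fin 0 → ℤ × ℤ) : Sat R.plane (initialRow σ xs) v := by
  induction xs with
  | nil =>
    simp only [initialRow, sat_exPred, sat_symbol₁, symbol_plane_cell, exists_eq_left]
  | cons y ys ih =>
    obtain ⟨zs, rfl⟩ := h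
    refine (sat_initialRow_cons ..).2
      ⟨ih ((List.suffix_cons y ys).trans (List.suffix_append ..)), ?_⟩
    simp only [symbol_plane_tile, symbol_plane_cell]
    rintro _ rfl
    refine ⟨placed_initial (xs := x :: zs) R, _, ?_, rfl⟩
    have hmod : ((-2 * ys.length - 1 : ℤ) : ZMod 3) = ys.length - 1 := by
      rw [Int.cast_sub, intCast_neg_two_mul, Int.cast_natCast, Int.cast_one]
    rw [← hmod]
    refine sameBrick_row 0 ?_ ?_ <;> rw [abs_le] <;> constructor <;> push_cast <;> linarith

end Run

end Plane

open Classical in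
/-- The sentence saying that the reading event with tile `⟨c, d', .read (some x') s first⟩` is
constrained as required by a cell with tile `⟨c, d, .write x signal⟩`. -/
noncomputable def matchAxiom (c d d' : ZMod 3) (x x' : α × Bool) (signal : Signal σ) (s : σ)
    (first : Bool) : F 0 :=
  .allPred (Tile.symbol ⟨c, d, .write x signal⟩) (.allEdge (c + d)
    (.imp (.symbol (Tile.symbol ⟨c, d', .read (some x') s first⟩))
      (if x = x' then .edge (c - d) else .fls le_rfl)))

theorem guarded_matchAxiom (c d d' : ZMod 3) (x x' : α × Bool) (signal : Signal σ) (s : σ)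
    (first : Bool) : Guarded (matchAxiom c d d' x x' signal s first) := by
  refine guarded_allPred _ (guarded_allEdge _ (.imp (.patom ..) ?_))
  split_ifs
  exacts [.batom _, .fls _]

theorem sat_matchAxiom {A : Type} (N : Str A) (c d d' : ZMod 3) (x x' : α × Bool)
    (signal : Signal σ) (s : σ) (first : Bool) (v : Fin 0 → A) :
    Sat N (matchAxiom c d d' x x' signal s first) v ↔ ∀ a,
      N.symbol (Tile.symbol ⟨c, d, .write x signal⟩) a → ∀ b, N.rel (c + d) a b →
        N.symbol (Tile.symbol ⟨c, d', .read (some x') s first⟩) b →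
          x = x' ∧ N.rel (c - d) a b := by
  by_cases hx : x = x' <;>
    simp only [matchAxiom, sat_allPred, sat_allEdge, Sat, sat_symbol₂, sat_edge, if_pos, if_neg, hx,
      true_and, false_and, not_false_eq_true]

variable (M : Sweeper α σ) [Finite α] [Finite σ]

instance : Finite (Signal σ) :=
  have := Fintype.ofFinite σ
  inferInstance

instance : Finite (Tile α σ) :=
  have := Fintype.ofFinite α
  have := Fintype.ofFinite σ
  inferInstance

/-- The sentence saying that each event with tile `τ` has a next one. -/
noncomputable def succAxiom (τ : Tile α σ) : F 0 :=
  .allPred τ.symbol (.exEdge τ.link₁ (.and (.edge τ.link₂)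
    (.disj le_rfl fun τ' : {τ' // M.Succ τ τ'} => .symbol τ'.1.symbol)))

theorem guarded_succAxiom (τ : Tile α σ) : Guarded (M.succAxiom τ) :=
  guarded_allPred _ (guarded_exEdge _ (.and (.batom _) (guarded_disj _ fun _ => .patom ..)))

theorem sat_succAxiom {A : Type} (N : Str A) (τ : Tile α σ) (v : Fin 0 → A) :
    Sat N (M.succAxiom τ) v ↔ ∀ a, N.symbol τ.symbol a → ∃ b τ', N.rel τ.link₁ a b ∧
      N.rel τ.link₂ a b ∧ M.Succ τ τ' ∧ N.symbol τ'.symbol b := by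
  simp only [succAxiom, sat_allPred, sat_exEdge, Sat, sat_edge, sat_disj, sat_symbol₂,
    Subtype.exists, exists_prop, exists_and_left]

/-- The sentence expressing `Rules`. -/
noncomputable def rulesAxiom : F 0 :=
  .and (.conj zero_le_two fun τ : {τ : Tile α σ // τ.IsActive} => M.succAxiom τ.1)
    (.conj zero_le_two (ι := (ZMod 3 × ZMod 3 × ZMod 3) × ((α × Bool) × (α × Bool)) ×
        Signal σ × σ × Bool) fun ((c, d, d'), (x, x'), signal, s, first) =>
      matchAxiom c d d' x x' signal s first)

theorem guarded_rulesAxiom : Guarded M.rulesAxiom :=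
  .and (guarded_conj _ fun _ => guarded_succAxiom ..)
    (guarded_conj _ fun _ => guarded_matchAxiom ..)

theorem sat_rulesAxiom {A : Type} (N : Str A) (v : Fin 0 → A) :
    Sat N M.rulesAxiom v ↔ M.Rules (fun τ => N.symbol τ.symbol) N.rel := by
  simp only [rulesAxiom, Sat, sat_conj, sat_succAxiom, sat_matchAxiom, Subtype.forall]
  constructor
  · rintro ⟨hsucc, hmatch⟩
    exact ⟨fun τ a hactive => hsucc τ hactive a, fun c d d' x signal x' s first a b ha hb hab =>
      hmatch ((c, d, d'), (x, x'), signal, s, first) a ha b hab hb⟩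
  · intro h
    exact ⟨fun τ hactive a => h.succ hactive, fun i a ha b hab hb => h.match_read ha hb hab⟩

/-- The sentence that is satisfiable if and only if the automaton does not halt when started in
state `s` on the word `x :: xs`. -/
noncomputable def divergence (s : σ) (x : α) (xs : List α) : F 0 :=
  .and (.and M.rulesAxiom (initialRow σ xs)) (.allPred (cellSymbol α σ xs.length)
    (.symbol (Tile.symbol ⟨xs.length, -1, .write (x, xs.isEmpty) (.turn s)⟩)))

theorem guarded_divergence (s : σ) (x : α) (xs : List α) : Guarded (M.divergence s x xs) :=
  .and (.and M.guarded_rulesAxiom (guarded_initialRow xs)) (guarded_allPred _ (.patom ..))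

theorem sat_divergence {A : Type} (N : Str A) (v : Fin 0 → A) (s : σ) (x : α) (xs : List α) :
    Sat N (M.divergence s x xs) v ↔
      (M.Rules (fun τ => N.symbol τ.symbol) N.rel ∧ Sat N (initialRow σ xs) v) ∧
        ∀ a, N.symbol (cellSymbol α σ xs.length) a →
          N.symbol (Tile.symbol ⟨xs.length, -1, .write (x, xs.isEmpty) (.turn s)⟩) a := by
  simp only [divergence, Sat, sat_rulesAxiom, sat_allPred, sat_symbol₁]

variable {M}

theorem diverges_of_satisfiable {s : σ} {x : α} {xs : List α}
    (h : Satisfiable (M.divergence s x xs)) : M.Diverges ⟨s, [], x :: xs⟩ := by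
  obtain ⟨A, -, N, htrans, hsat⟩ := h
  have (k : ZMod 3) : IsTrans A (N.rel k) := ⟨fun _ _ _ hab hbc => htrans k hab hbc⟩
  obtain ⟨⟨hrules, hrow⟩, hturn⟩ := (M.sat_divergence N _ s x xs).1 hsat
  obtain ⟨a, ha, htrail⟩ := exists_trail_of_sat_initialRow hrow
  obtain ⟨b, hb⟩ := hrules.exists_represents_turn (hturn a ha) htrail
  exact hrules.diverges hb

theorem satisfiableEquiv_of_diverges {s : σ} {x : α} {xs : List α}
    (h : M.Diverges ⟨s, [], x :: xs⟩) : SatisfiableEquiv (M.divergence s x xs) := by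
  obtain ⟨R⟩ := h.nonempty_run (List.cons_ne_nil x xs)
  refine ⟨ℤ × ℤ, inferInstance, R.plane, sameBrick_equivalence, (M.sat_divergence ..).2 ?_⟩
  simp only [Run.symbol_plane_tile, Run.symbol_plane_cell]
  refine ⟨⟨R.rules, R.sat_initialRow_plane List.suffix_rfl _⟩, ?_⟩
  rintro _ rfl
  have hplaced := Run.placed_initial (xs := []) R
  rwa [List.length_nil, Run.signal, R.state_zero] at hplaced

end Sweeper

end Reduction

/-! ### Computability of the reduction -/

section Computability

instance : Primcodable (ZMod 3) :=
  inferInstanceAs (Primcodable (Fin 3))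

theorem primrec_natCast_zmod_three : Primrec (Nat.cast : ℕ → ZMod 3) := by
  refine Primrec.fin_val_iff.1 ?_
  refine (Primrec.nat_mod.comp .id (.const 3)).of_eq fun n => ?_
  exact (ZMod.val_natCast 3 n).symm

theorem primrec_isEmpty {α : Type} [Primcodable α] : Primrec (List.isEmpty : List α → Bool) :=
  (Primrec.list_casesOn (f := id) .id (.const true) (.const false)).of_eq fun xs => by
    cases xs <;> rfl

section Encode

variable {β S : Type} [Primcodable β] [Encodable S] {m : ℕ}

theorem primrec_encode_symbol {i : β → S} (hi : Primrec fun b => Encodable.encode (i b))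
    (h : 1 ≤ m) (hm : m ≤ 2) : Primrec fun b => encode (.symbol (i b) h hm : F m) :=
  Primrec₂.natPair.comp (.const 0) hi

theorem primrec_encode_edge {k : β → ZMod 3} (hk : Primrec k) :
    Primrec fun b => encode (.edge (k b)) :=
  Primrec₂.natPair.comp (.const 1) (Primrec.fin_val.comp hk)

theorem primrec_encode_and {φ ψ : β → F m} (hφ : Primrec fun b => encode (φ b))
    (hψ : Primrec fun b => encode (ψ b)) : Primrec fun b => encode (.and (φ b) (ψ b)) :=
  Primrec₂.natPair.comp (.const 4) (Primrec₂.natPair.comp hφ hψ)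

theorem primrec_encode_allPred {i : β → S} {χ : β → F 1}
    (hi : Primrec fun b => Encodable.encode (i b)) (hχ : Primrec fun b => encode (χ b)) :
    Primrec fun b => encode (.allPred (i b) (χ b)) :=
  Primrec₂.natPair.comp (.const 8) (Primrec₂.natPair.comp (.const 6)
    (Primrec₂.natPair.comp (primrec_encode_symbol hi _ _) hχ))

theorem primrec_encode_exEdge {k : β → ZMod 3} {χ : β → F 2} (hk : Primrec k)
    (hχ : Primrec fun b => encode (χ b)) : Primrec fun b => encode (.exEdge (k b) (χ b)) :=
  Primrec₂.natPair.comp (.const 7) (primrec_encode_and (primrec_encode_edge hk) hχ)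

end Encode

variable {α σ : Type} [Encodable (Tile α σ)]

theorem primrec_encode_cellSymbol : Primrec fun k => Encodable.encode (cellSymbol α σ k) :=
  Primrec.nat_double_succ

variable [Primcodable α] [Finite α]

theorem primrec_encode_write (signal : Signal σ) : Primrec fun w : α × List α =>
    Encodable.encode (Tile.symbol ⟨w.2.length, -1, .write (w.1, w.2.isEmpty) signal⟩) := by
  have hfinite := Primrec.dom_finite fun p : ZMod 3 × α × Bool =>
    Encodable.encode (Tile.symbol ⟨p.1, -1, .write p.2 signal⟩)
  exact hfinite.comp (.pair (primrec_natCast_zmod_three.comp (Primrec.list_length.comp .snd))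
    (.pair .fst (primrec_isEmpty.comp .snd)))

theorem primrec_encode_initialCell :
    Primrec fun w : α × List α => encode (initialCell σ w.1 w.2) := by
  have hlength : Primrec fun w : α × List α => w.2.length := Primrec.list_length.comp .snd
  have hlink : Primrec fun w : α × List α => (w.2.length - 1 : ZMod 3) :=
    (Primrec.dom_finite fun k : ZMod 3 => k - 1).comp (primrec_natCast_zmod_three.comp hlength)
  exact primrec_encode_allPred (primrec_encode_cellSymbol.comp hlength)
    (primrec_encode_and (primrec_encode_symbol (primrec_encode_write .still) _ _)
      (primrec_encode_exEdge hlink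
        (primrec_encode_symbol (primrec_encode_cellSymbol.comp (Primrec.succ.comp hlength)) _ _)))

theorem primrec_encode_initialRow : Primrec fun xs : List α => encode (initialRow σ xs) := by
  have hcons : Primrec₂ fun (_ : List α) (p : α × List α × ℕ) =>
      Nat.pair 4 (Nat.pair p.2.2 (encode (initialCell σ p.1 p.2.1))) :=
    (Primrec₂.natPair.comp (.const 4) (Primrec₂.natPair.comp (.comp .snd .snd)
      (primrec_encode_initialCell.comp (.pair .fst (.comp .fst .snd))))).comp₂ .right
  refine (Primrec.list_rec .id (.const (encode (initialRow (α := α) σ []))) hcons).of_eq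
    fun xs => ?_
  induction xs with
  | nil => rfl
  | cons x xs ih =>
    exact congrArg (fun n => Nat.pair 4 (Nat.pair n (encode (initialCell σ x xs)))) ih

theorem Sweeper.primrec_encode_divergence [Finite σ] (M : Sweeper α σ) (s : σ) :
    Primrec fun w : α × List α => encode (M.divergence s w.1 w.2) :=
  primrec_encode_and
    (primrec_encode_and (.const _) (primrec_encode_initialRow.comp .snd))
    (primrec_encode_allPred
      (primrec_encode_cellSymbol.comp (Primrec.list_length.comp .snd))
      (primrec_encode_symbol (primrec_encode_write _) _ _))

end Computability

theorem SatisfiableEquiv.satisfiable {φ : F 0} : SatisfiableEquiv φ → Satisfiable φ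
  | ⟨A, hA, N, hN, hφ⟩ => ⟨A, hA, N, fun k _ _ _ => (hN k).trans, hφ⟩

instance : Finite Turing.Dir :=
  .of_injective (fun d => d = .left) fun d e h => by cases d <;> cases e <;> simp_all

theorem exists_sweeper_diverges_not_computablePred :
    ∃ (α σ : Type) (_ : Finite α) (_ : Finite σ) (_ : Primcodable α) (M : Sweeper α σ) (s : σ),
      ¬ ComputablePred fun w : α × List α => M.Diverges ⟨s, [], w.1 :: w.2⟩ := by
  obtain ⟨Γ, Q, _, _, _, _, _, M, hM⟩ := exists_machine_halting_not_computablePred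
  obtain ⟨_⟩ := nonempty_primcodable Q
  refine ⟨Γ × Option Q, Turing.Dir × Option Q, inferInstance, inferInstance, inferInstance,
    .ofTM0 M, (.right, none), fun h => hM ?_⟩
  have hword : Computable fun l : List Γ =>
      ((l.headI, some (default : Q)), l.tail.map (Sweeper.unmarked (Q := Q))) :=
    (Primrec.pair (.pair Primrec.list_headI (.const _)) (.list_map Primrec.list_tail
      (Primrec.pair .snd (.const none)).to₂)).to_comp
  refine (ComputablePred.computable_of_manyOneReducible (.mk _ hword) h).not.of_eq fun l => ?_
  exact not_not.trans (Sweeper.eval_ofTM0_dom M l)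

theorem not_exists_computable_decider {P : F 0 → Prop} (hequiv : ∀ φ, SatisfiableEquiv φ → P φ)
    (hsat : ∀ φ, P φ → Satisfiable φ) :
    ¬ ∃ f : ℕ → Bool, Computable f ∧ ∀ φ : F 0, Guarded φ → (f (encode φ) = true ↔ P φ) := by
  rintro ⟨f, hf, hdecides⟩
  obtain ⟨α, σ, _, _, _, M, s, hM⟩ := exists_sweeper_diverges_not_computablePred
  let _ : Encodable (Tile α σ) := .ofCountable _
  refine hM (ComputablePred.computable_iff.2
    ⟨_, hf.comp (M.primrec_encode_divergence s).to_comp, funext fun w => propext ?_⟩)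
  rw [hdecides _ (M.guarded_divergence s w.1 w.2)]
  exact ⟨fun h => hequiv _ (Sweeper.satisfiableEquiv_of_diverges h),
    fun h => Sweeper.diverges_of_satisfiable (hsat _ h)⟩

/-- Corollary of Theorem 7.  The satisfiability problem for the
intersection of the fluted fragment with the two-variable guarded fragment is
undecidable in the presence of three distinguished transitive relations, and likewise
when the three distinguished relations are required to be equivalence relations. -/
theorem guarded_fluted_threeTrans_undecidable :
    (¬ ∃ f : ℕ → Bool, Computable f ∧
      ∀ φ : F 0, Guarded φ → (f (encode φ) = true ↔ Satisfiable φ)) ∧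
    (¬ ∃ f : ℕ → Bool, Computable f ∧
      ∀ φ : F 0, Guarded φ → (f (encode φ) = true ↔ SatisfiableEquiv φ)) := by
  exact ⟨not_exists_computable_decider (fun _ h => h.satisfiable) fun _ => id,
    not_exists_computable_decider (fun _ => id) fun _ h => h.satisfiable⟩

end FlutedThreeTrans
end

section
/- The satisfiability problem and the finite satisfiability problem for FL² with equality in the presence of two distinguished transitive relations are both undecidable: there is no algorithm that, given a sentence of the two-variable fluted fragment with equality over a signature with two distinguished binary predicates, decides whether it has a model (respectively, a finite model) in which both distinguished relations are transitive. -/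
/- STATEMENT 16: The satisfiability and finite satisfiability problems for the
two-variable fluted fragment with equality and two distinguished transitive
relations are undecidable. -/

namespace FlutedTwoTransEq

/-- FL²-formulas with equality over countably many unary predicates (indexed by `ℕ`)
and two distinguished binary predicates (indexed by `Fin 2`); the index `m ≤ 2` records
that the free variables form a suffix of `x₁, …, x_m`, all atoms ending at the last
variable, and only the last variable may be quantified. -/
inductive F : ℕ → Type
  | patom (p : ℕ) {m : ℕ} (h1 : 1 ≤ m) (h2 : m ≤ 2) : F m
  | batom (k : Fin 2) : F 2
  | eqatom : F 2
  | fls {m : ℕ} (h : m ≤ 2) : F m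
  | not {m : ℕ} (φ : F m) : F m
  | and {m : ℕ} (φ ψ : F m) : F m
  | or {m : ℕ} (φ ψ : F m) : F m
  | imp {m : ℕ} (φ ψ : F m) : F m
  | ex {m : ℕ} (h : m ≤ 1) (φ : F (m + 1)) : F m
  | all {m : ℕ} (h : m ≤ 1) (φ : F (m + 1)) : F m

/-- A structure interpreting the unary predicates and the two distinguished binary
predicates. -/
structure Str (A : Type) where
  U : ℕ → A → Prop
  T : Fin 2 → A → A → Prop

def Sat {A : Type} (M : Str A) : ∀ {m : ℕ}, F m → (Fin m → A) → Prop
  | m, .patom p h1 _, v => M.U p (v ⟨m - 1, by omega⟩)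
  | _, .batom k, v => M.T k (v 0) (v 1)
  | _, .eqatom, v => v 0 = v 1
  | _, .fls _, _ => False
  | _, .not φ, v => ¬ Sat M φ v
  | _, .and φ ψ, v => Sat M φ v ∧ Sat M ψ v
  | _, .or φ ψ, v => Sat M φ v ∨ Sat M ψ v
  | _, .imp φ ψ, v => Sat M φ v → Sat M ψ v
  | _, .ex _ φ, v => ∃ a : A, Sat M φ (Fin.snoc v a)
  | _, .all _ φ, v => ∀ a : A, Sat M φ (Fin.snoc v a)

/-- `φ` has a model in which both distinguished binary relations are transitive. -/
def Satisfiable (φ : F 0) : Prop :=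
  ∃ (A : Type) (_ : Nonempty A) (M : Str A),
    (∀ k, Transitive (M.T k)) ∧ Sat M φ (fun i => i.elim0)

/-- `φ` has a finite model in which both distinguished binary relations are
transitive. -/
def FinitelySatisfiable (φ : F 0) : Prop :=
  ∃ (A : Type) (_ : Nonempty A) (_ : Finite A) (M : Str A),
    (∀ k, Transitive (M.T k)) ∧ Sat M φ (fun i => i.elim0)

/-- A concrete Gödel numbering of FL²-formulas with equality. -/
def encode : ∀ {m : ℕ}, F m → ℕ
  | _, .patom p _ _ => Nat.pair 0 p
  | _, .batom k => Nat.pair 1 k.val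
  | _, .eqatom => Nat.pair 2 0
  | _, .fls _ => Nat.pair 3 0
  | _, .not φ => Nat.pair 4 (encode φ)
  | _, .and φ ψ => Nat.pair 5 (Nat.pair (encode φ) (encode ψ))
  | _, .or φ ψ => Nat.pair 6 (Nat.pair (encode φ) (encode ψ))
  | _, .imp φ ψ => Nat.pair 7 (Nat.pair (encode φ) (encode ψ))
  | _, .ex _ φ => Nat.pair 8 (encode φ)
  | _, .all _ φ => Nat.pair 9 (encode φ)

/-!
The formula of a tiling system forces an infinite grid inside each of its models. Within a row, one
of the two transitive relations leads from each odd column to both of its neighbours. The same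
relation joins this row to the next one by vertical edges in both directions, so going down, across
and up gives, by transitivity, the corresponding edges in the next row. These edges are required to
belong to the other relation as well, which then carries them one row further, so that the roles of
the two relations alternate. Conversely, a tiling whose first row with a final tile consists of
final tiles, and whose rows are ultimately constant up to there, can be cut off above that row and
folded back with period four on the right, which gives a finite model.

Applied to the space-time diagrams of a fixed universal machine, with the input written into the
bottom row, this yields a computable sequence of sentences that have a finite model if the `n`-th
program outputs `0` on input `n`, and no model if it outputs `1`. These two sets of programs are
recursively inseparable, whence both problems are undecidable at once. The universal machine
receives `n` as `2 ^ n`, since the stack contents encoding `2 ^ n` can be produced by a counter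
running down from `n + 2` that is tested only for the values `0`, `1` and `2`.
-/

/-! ### Satisfaction of composite formulas -/

namespace F

/-- The unary atom `p(x_m)`. -/
def pred (p : ℕ) {m : ℕ} (h1 : 1 ≤ m := by decide) (h2 : m ≤ 2 := by decide) : F m :=
  .patom p h1 h2

/-- The sentence `∀ x₁ (P → ∃ x₂ R)`. -/
def allEx (P : F 1) (R : F 2) : F 0 :=
  .all (by decide) (.imp P (.ex (by decide) R))

/-- The sentence `∀ x₁ (P → ∀ x₂ (Q → R))`. -/
def allAll (P : F 1) (Q R : F 2) : F 0 :=
  .all (by decide) (.imp P (.all (by decide) (.imp Q R)))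

/-- Conjunction of a list of formulas. -/
def conj {m : ℕ} (l : List (F m)) (h : m ≤ 2 := by decide) : F m :=
  l.foldr .and (.not (.fls h))

/-- Disjunction of a list of formulas. -/
def disj {m : ℕ} (l : List (F m)) (h : m ≤ 2 := by decide) : F m :=
  l.foldr .or (.fls h)

/-- Conjunction of a family of formulas indexed by a finite type. -/
noncomputable def iInf {ι : Type} [Finite ι] {m : ℕ} (φ : ι → F m) (h : m ≤ 2 := by decide) : F m :=
  have := Fintype.ofFinite ι
  conj (Finset.univ.toList.map φ) h

open Classical in
/-- Disjunction of the formulas `φ i` over all `i` with `P i`. -/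
noncomputable def iSup {ι : Type} [Finite ι] {m : ℕ} (P : ι → Prop) (φ : ι → F m)
    (h : m ≤ 2 := by decide) : F m :=
  have := Fintype.ofFinite ι
  disj ((Finset.univ.filter P).toList.map φ) h

section Sat

variable {A : Type} (M : Str A)

@[simp] theorem sat_pred_one (p : ℕ) (a : A) : Sat M (pred p) ![a] ↔ M.U p a := by
  simp [pred, Sat]

@[simp] theorem sat_pred_two (p : ℕ) (a b : A) : Sat M (pred p) ![a, b] ↔ M.U p b := by
  simp [pred, Sat]

@[simp] theorem sat_batom (k : Fin 2) (a b : A) : Sat M (batom k) ![a, b] ↔ M.T k a b := Iff.rfl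

@[simp] theorem sat_eqatom (a b : A) : Sat M eqatom ![a, b] ↔ a = b := Iff.rfl

section

variable {m : ℕ} (φ ψ : F m) (v : Fin m → A)

@[simp] theorem sat_not : Sat M φ.not v ↔ ¬ Sat M φ v := Iff.rfl

@[simp] theorem sat_and : Sat M (φ.and ψ) v ↔ Sat M φ v ∧ Sat M ψ v := Iff.rfl

@[simp] theorem sat_or : Sat M (φ.or ψ) v ↔ Sat M φ v ∨ Sat M ψ v := Iff.rfl

@[simp] theorem sat_imp : Sat M (φ.imp ψ) v ↔ (Sat M φ v → Sat M ψ v) := Iff.rfl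

end

theorem snoc_fin_zero (v : Fin 0 → A) (a : A) : (Fin.snoc v a : Fin 1 → A) = ![a] :=
  funext fun i => by fin_cases i; rfl

@[simp] theorem sat_ex_zero (φ : F 1) (h : 0 ≤ 1) (v : Fin 0 → A) :
    Sat M (.ex h φ) v ↔ ∃ a, Sat M φ ![a] := by
  simp only [Sat, snoc_fin_zero]

@[simp] theorem sat_all_zero (φ : F 1) (h : 0 ≤ 1) (v : Fin 0 → A) :
    Sat M (.all h φ) v ↔ ∀ a, Sat M φ ![a] := by
  simp only [Sat, snoc_fin_zero]

@[simp] theorem sat_ex_one (φ : F 2) (h : 1 ≤ 1) (a : A) :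
    Sat M (.ex h φ) ![a] ↔ ∃ b, Sat M φ ![a, b] := by
  simp [Sat]

@[simp] theorem sat_all_one (φ : F 2) (h : 1 ≤ 1) (a : A) :
    Sat M (.all h φ) ![a] ↔ ∀ b, Sat M φ ![a, b] := by
  simp [Sat]

@[simp] theorem sat_allEx (P : F 1) (R : F 2) (v : Fin 0 → A) :
    Sat M (allEx P R) v ↔ ∀ a, Sat M P ![a] → ∃ b, Sat M R ![a, b] := by
  simp [allEx]

@[simp] theorem sat_allAll (P : F 1) (Q R : F 2) (v : Fin 0 → A) :
    Sat M (allAll P Q R) v ↔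
      ∀ a, Sat M P ![a] → ∀ b, Sat M Q ![a, b] → Sat M R ![a, b] := by
  simp [allAll]

section

variable {m : ℕ} (l : List (F m)) (h : m ≤ 2) (v : Fin m → A)

@[simp] theorem sat_conj : Sat M (conj l h) v ↔ ∀ φ ∈ l, Sat M φ v := by
  induction l with
  | nil => simp [conj, Sat]
  | cons φ l ih => rw [List.forall_mem_cons, ← ih]; rfl

@[simp] theorem sat_disj : Sat M (disj l h) v ↔ ∃ φ ∈ l, Sat M φ v := by
  induction l with
  | nil => simp [disj, Sat]
  | cons φ l ih => rw [List.exists_mem_cons_iff, ← ih]; rfl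

end

section

variable {ι : Type} [Finite ι] {m : ℕ} (φ : ι → F m) (h : m ≤ 2) (v : Fin m → A)

@[simp] theorem sat_iInf : Sat M (iInf φ h) v ↔ ∀ i, Sat M (φ i) v := by
  simp [iInf]

@[simp] theorem sat_iSup (P : ι → Prop) : Sat M (iSup P φ h) v ↔ ∃ i, P i ∧ Sat M (φ i) v := by
  simp [iSup]

end

end Sat

end F

theorem FinitelySatisfiable.satisfiable {φ : F 0} : FinitelySatisfiable φ → Satisfiable φ
  | ⟨A, hA, _, hM⟩ => ⟨A, hA, hM⟩

/-! ### Tiling systems and their formulas -/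

/-- A tiling system for the quarter plane with horizontal and vertical constraints `H` and `V`,
a condition on the tile in the corner, conditions `init 0, …, init 3` from which the requirement
on the bottom row is assembled, and tiles `final` in the presence of which a row need not have a
successor. -/
structure TileSystem (C : Type) where
  H : C → C → Prop
  V : C → C → Prop
  corner : C → Prop
  final : C → Prop
  init : ℕ → C → Prop

/-- Predicate for the points in the columns congruent to `i` and the rows of parity `j`. -/
def gridPred (i : ZMod 4) (j : Fin 2) : ℕ := Nat.pair 0 (Nat.pair i.val j)

/-- Predicate for the points above the bottom row. -/
def raisedPred : ℕ := Nat.pair 1 0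

/-- Predicate for the points carrying the counter value `q`; the counter is decremented along the
bottom row. -/
def counterPred (q : ℕ) : ℕ := Nat.pair 2 q

/-- Predicate for the points carrying the tile `c`. -/
noncomputable def tilePred {C : Type} [Finite C] (c : C) : ℕ :=
  Nat.pair 3 (Finite.equivFin C c)

namespace Str

variable {A C : Type} [Finite C] (M : Str A)

/-- `a` lies in a column congruent to `i` and in a row of parity `j`. -/
abbrev OnGrid (i : ZMod 4) (j : Fin 2) (a : A) : Prop := M.U (gridPred i j) a

/-- `a` lies above the bottom row. -/
abbrev Raised (a : A) : Prop := M.U raisedPred a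

/-- `a` lies on the bottom row, in a column congruent to `i`. -/
abbrev Bottom (i : ZMod 4) (a : A) : Prop := M.OnGrid i 0 a ∧ ¬ M.Raised a

/-- `a` carries the counter value `q`. -/
abbrev HasCounter (q : ℕ) (a : A) : Prop := M.U (counterPred q) a

/-- `a` carries the tile `c`. -/
abbrev HasTile (c : C) (a : A) : Prop := M.U (tilePred c) a

end Str

/-- The formula `Bottom i` in the last variable. -/
def bottomAt (i : ZMod 4) {m : ℕ} (h1 : 1 ≤ m := by decide) (h2 : m ≤ 2 := by decide) : F m :=
  .and (.pred (gridPred i 0) h1 h2) (.not (.pred raisedPred h1 h2))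

/-- The last variable carries a tile satisfying `P`. -/
noncomputable def tileIn {C : Type} [Finite C] (P : C → Prop) {m : ℕ} (h1 : 1 ≤ m := by decide)
    (h2 : m ≤ 2 := by decide) : F m :=
  .iSup P (fun c => .pred (tilePred c) h1 h2) h2

namespace TileSystem

variable {C : Type} [Finite C] (S : TileSystem C)

/-- The formula expressing `BottomRules`. -/
noncomputable def bottomFormula : F 0 := .iInf fun m : ZMod 4 => .conj [
  .allEx (bottomAt (2 * m)) (.and (.batom 0) (bottomAt (2 * m + 1))),
  .allEx (bottomAt (2 * m + 1)) (.and (.and (.batom 0) (.batom 1)) (bottomAt (2 * m))),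
  .allAll (bottomAt (2 * m)) (.and (bottomAt (2 * m)) (.batom 0)) .eqatom,
  .allEx (bottomAt (2 * m + 1)) (.and (.batom 1) (bottomAt (2 * m + 2)))]

/-- On the bottom row, the columns `2m` and `2m + 1` are joined by `T 0` in both directions, and
`T 1` leads from each odd column to both of its neighbours. -/
structure BottomRules {A : Type} (M : Str A) : Prop where
  exists_right_of_even : ∀ m a, M.Bottom (2 * m) a → ∃ b, M.T 0 a b ∧ M.Bottom (2 * m + 1) b
  exists_left_of_odd : ∀ m a, M.Bottom (2 * m + 1) a →
    ∃ b, (M.T 0 a b ∧ M.T 1 a b) ∧ M.Bottom (2 * m) b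
  eq_of_T_zero : ∀ m a, M.Bottom (2 * m) a → ∀ b, M.Bottom (2 * m) b ∧ M.T 0 a b → a = b
  exists_right_of_odd : ∀ m a, M.Bottom (2 * m + 1) a → ∃ b, M.T 1 a b ∧ M.Bottom (2 * m + 2) b

/-- The formula expressing `VerticalRules`. -/
noncomputable def verticalFormula : F 0 := .iInf fun i : ZMod 4 => .iInf fun j : Fin 2 => .conj [
  .allEx (.and (.pred (gridPred i j)) (.not (tileIn S.final)))
    (.and (.batom (j + 1)) (.and (.pred (gridPred i (j + 1))) (.pred raisedPred))),
  .allEx (.and (.pred (gridPred i (j + 1))) (.pred raisedPred))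
    (.and (.batom (j + 1)) (.pred (gridPred i j))),
  .allAll (.pred (gridPred i j)) (.and (.pred (gridPred i j)) (.batom (j + 1))) .eqatom,
  .iInf fun c : C => .allAll (.and (.pred (gridPred i j)) (.pred (tilePred c)))
    (.and (.pred (gridPred i (j + 1))) (.batom (j + 1))) (tileIn (S.V c))]

/-- Vertically adjacent points, the lower one in a row of parity `j`, are joined by `T (j + 1)` in
both directions and respect the vertical constraint. -/
structure VerticalRules {A : Type} (M : Str A) : Prop where
  exists_above : ∀ i j a, M.OnGrid i j a ∧ (¬ ∃ c, S.final c ∧ M.HasTile c a) →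
    ∃ b, M.T (j + 1) a b ∧ M.OnGrid i (j + 1) b ∧ M.Raised b
  exists_below : ∀ i j a, M.OnGrid i (j + 1) a ∧ M.Raised a →
    ∃ b, M.T (j + 1) a b ∧ M.OnGrid i j b
  eq_of_T : ∀ i j a, M.OnGrid i j a → ∀ b, M.OnGrid i j b ∧ M.T (j + 1) a b → a = b
  exists_tile_above : ∀ i j c a, M.OnGrid i j a ∧ M.HasTile c a →
    ∀ b, M.OnGrid i (j + 1) b ∧ M.T (j + 1) a b → ∃ d, S.V c d ∧ M.HasTile d b

/-- The formula expressing `HorizontalRules`. -/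
noncomputable def horizontalFormula : F 0 := .iInf fun m : ZMod 4 => .iInf fun j : Fin 2 => .conj [
  .allAll (.pred (gridPred (2 * m + 1) j))
    (.and (.or (.pred (gridPred (2 * m) j)) (.pred (gridPred (2 * m + 2) j))) (.pred raisedPred))
    (.and (.imp (.batom 0) (.batom 1)) (.imp (.batom 1) (.batom 0))),
  .iInf fun c : C => .allAll (.and (.pred (gridPred (2 * m + 1) j)) (.pred (tilePred c)))
    (.and (.pred (gridPred (2 * m + 2) j)) (.batom 1)) (tileIn (S.H c)),
  .iInf fun c : C => .allAll (.and (.pred (gridPred (2 * m + 1) j)) (.pred (tilePred c)))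
    (.and (.pred (gridPred (2 * m) j)) (.batom 1)) (tileIn (S.H · c))]

/-- Above the bottom row, `T 0` and `T 1` agree on pairs leading from an odd column to a
neighbouring one; such pairs respect the horizontal constraint. -/
structure HorizontalRules {A : Type} (M : Str A) : Prop where
  sync : ∀ m j a, M.OnGrid (2 * m + 1) j a →
    ∀ b, (M.OnGrid (2 * m) j b ∨ M.OnGrid (2 * m + 2) j b) ∧ M.Raised b →
      (M.T 0 a b → M.T 1 a b) ∧ (M.T 1 a b → M.T 0 a b)
  exists_tile_right : ∀ m j c a, M.OnGrid (2 * m + 1) j a ∧ M.HasTile c a →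
    ∀ b, M.OnGrid (2 * m + 2) j b ∧ M.T 1 a b → ∃ d, S.H c d ∧ M.HasTile d b
  exists_tile_left : ∀ m j c a, M.OnGrid (2 * m + 1) j a ∧ M.HasTile c a →
    ∀ b, M.OnGrid (2 * m) j b ∧ M.T 1 a b → ∃ d, S.H d c ∧ M.HasTile d b

/-- The formula saying that the corner exists and carries the counter value `n`. -/
noncomputable def originFormula (n : ℕ) : F 0 :=
  .ex (by decide) (.and (bottomAt 0) (.and (.pred (counterPred n)) (tileIn S.corner)))

/-- The formula saying that the counter value `q` forces an initial tile and is decremented from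
one column of the bottom row to the next. -/
noncomputable def counterRule (q : ℕ) : F 0 := .and
  (.all (by decide) (.imp (.pred (counterPred q)) (tileIn (S.init (min q 3)))))
  (.iInf fun i : ZMod 4 => .allAll (.and (.pred (counterPred q)) (bottomAt i))
    (.and (bottomAt (i + 1)) (.or (.batom 0) (.batom 1))) (.pred (counterPred (q - 1))))

/-- The counter rules for all values up to `n`. -/
noncomputable def counterFormula : ℕ → F 0
  | 0 => S.counterRule 0
  | n + 1 => .and (S.counterRule (n + 1)) (counterFormula n)

/-- A counter on the bottom row starts with the value `n` at the corner, is decremented from each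
column to the next, and selects the initial tiles. -/
structure CounterRules (n : ℕ) {A : Type} (M : Str A) : Prop where
  exists_origin : ∃ a, M.Bottom 0 a ∧ M.HasCounter n a ∧ ∃ c, S.corner c ∧ M.HasTile c a
  exists_init_tile : ∀ q ≤ n, ∀ a, M.HasCounter q a → ∃ c, S.init (min q 3) c ∧ M.HasTile c a
  hasCounter_succ : ∀ q ≤ n, ∀ i a, M.HasCounter q a ∧ M.Bottom i a →
    ∀ b, M.Bottom (i + 1) b ∧ (M.T 0 a b ∨ M.T 1 a b) → M.HasCounter (q - 1) b

/-- No point carries two different tiles. -/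
noncomputable def uniqueTileFormula (C : Type) [Finite C] : F 0 :=
  .iInf fun c : C => .iInf fun d : {d // d ≠ c} =>
    .all (by decide) (.imp (.pred (tilePred c)) (.not (.pred (tilePred (d : C)))))

/-- The part of the formula of a tiling system that does not depend on the counter. -/
noncomputable def ruleFormula : F 0 :=
  .conj [bottomFormula, S.verticalFormula, S.horizontalFormula, uniqueTileFormula C]

/-- The formula describing the tilings by `S` whose bottom row starts with the counter value
`n`. -/
noncomputable def formula (n : ℕ) : F 0 :=
  .conj [S.originFormula n, S.counterFormula n, S.ruleFormula]

/-- The structures that satisfy the formula of a tiling system. -/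
structure IsModel (n : ℕ) {A : Type} (M : Str A) : Prop extends
    BottomRules M, VerticalRules S M, HorizontalRules S M, CounterRules S n M where
  tile_unique : ∀ (c d : C) a, M.HasTile c a → M.HasTile d a → c = d

section Sat

variable {A : Type} (M : Str A) (v : Fin 0 → A)

@[simp] theorem sat_bottomAt_one (i : ZMod 4) (a : A) : Sat M (bottomAt i) ![a] ↔ M.Bottom i a := by
  simp [bottomAt]

@[simp] theorem sat_bottomAt_two (i : ZMod 4) (a b : A) :
    Sat M (bottomAt i) ![a, b] ↔ M.Bottom i b := by
  simp [bottomAt]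

@[simp] theorem sat_tileIn_one (P : C → Prop) (a : A) :
    Sat M (tileIn P) ![a] ↔ ∃ c, P c ∧ M.HasTile c a := by
  simp [tileIn]

@[simp] theorem sat_tileIn_two (P : C → Prop) (a b : A) :
    Sat M (tileIn P) ![a, b] ↔ ∃ c, P c ∧ M.HasTile c b := by
  simp [tileIn]

theorem sat_bottomFormula : Sat M bottomFormula v ↔ BottomRules M := by
  simp only [bottomFormula, F.sat_iInf, F.sat_conj, List.forall_mem_cons, F.sat_allEx, F.sat_allAll,
    F.sat_and, F.sat_batom, F.sat_eqatom, sat_bottomAt_one, sat_bottomAt_two]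
  exact ⟨fun h => ⟨fun m => (h m).1, fun m => (h m).2.1, fun m => (h m).2.2.1,
      fun m => (h m).2.2.2.1⟩,
    fun h m => ⟨h.1 m, h.2 m, h.3 m, h.4 m, List.forall_mem_nil _⟩⟩

theorem sat_verticalFormula : Sat M S.verticalFormula v ↔ S.VerticalRules M := by
  simp only [verticalFormula, F.sat_iInf, F.sat_conj, List.forall_mem_cons, F.sat_allEx,
    F.sat_allAll, F.sat_and, F.sat_not, F.sat_batom, F.sat_eqatom, F.sat_pred_one, F.sat_pred_two,
    sat_tileIn_one, sat_tileIn_two]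
  exact ⟨fun h => ⟨fun i j => (h i j).1, fun i j => (h i j).2.1, fun i j => (h i j).2.2.1,
      fun i j => (h i j).2.2.2.1⟩,
    fun h i j => ⟨h.1 i j, h.2 i j, h.3 i j, h.4 i j, List.forall_mem_nil _⟩⟩

theorem sat_horizontalFormula : Sat M S.horizontalFormula v ↔ S.HorizontalRules M := by
  simp only [horizontalFormula, F.sat_iInf, F.sat_conj, List.forall_mem_cons, F.sat_allAll,
    F.sat_and, F.sat_or, F.sat_imp, F.sat_batom, F.sat_pred_one, F.sat_pred_two, sat_tileIn_two]
  exact ⟨fun h => ⟨fun m j => (h m j).1, fun m j => (h m j).2.1, fun m j => (h m j).2.2.1⟩,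
    fun h m j => ⟨h.1 m j, h.2 m j, h.3 m j, List.forall_mem_nil _⟩⟩

theorem sat_counterFormula (n : ℕ) :
    Sat M (S.counterFormula n) v ↔ ∀ q ≤ n, Sat M (S.counterRule q) v := by
  induction n with
  | zero => simp [counterFormula]
  | succ n ih =>
    simp only [counterFormula, F.sat_and, ih, Nat.le_succ_iff, or_imp, forall_and, forall_eq]
    exact and_comm

theorem sat_formula (n : ℕ) : Sat M (S.formula n) v ↔ S.IsModel n M := by
  simp only [formula, ruleFormula, originFormula, counterRule, uniqueTileFormula, F.sat_conj,
    List.forall_mem_cons, sat_bottomFormula, sat_verticalFormula, sat_horizontalFormula,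
    sat_counterFormula, F.sat_iInf, F.sat_ex_zero, F.sat_all_zero, F.sat_allAll, F.sat_and,
    F.sat_or, F.sat_imp, F.sat_not, F.sat_batom, F.sat_pred_one, F.sat_pred_two, sat_bottomAt_one,
    sat_bottomAt_two, sat_tileIn_one]
  constructor
  · rintro ⟨ho, hc, ⟨hb, hv, hh, ht, -⟩, -⟩
    exact ⟨hb, hv, hh, ⟨ho, fun q hq => (hc q hq).1, fun q hq => (hc q hq).2⟩,
      fun c d a hca hda => by_contra fun hcd => ht c ⟨d, Ne.symm hcd⟩ a hca hda⟩
  · intro h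
    exact ⟨h.exists_origin, fun q hq => ⟨h.exists_init_tile q hq, h.hasCounter_succ q hq⟩,
      ⟨h.toBottomRules, h.toVerticalRules, h.toHorizontalRules,
        fun c d a hc hd => d.2 (h.tile_unique _ _ _ hd hc), List.forall_mem_nil _⟩,
      List.forall_mem_nil _⟩

end Sat

/-- `t y x` is the tile in column `x` of row `y`. A row without a final tile has to be matched by
the row above it; beyond the first row with a final tile the tiling is of no relevance. -/
structure IsTiling (n : ℕ) (t : ℕ → ℕ → C) : Prop where
  corner : S.corner (t 0 0)
  init : ∀ x, S.init (min (n - x) 3) (t 0 x)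
  horizontal : ∀ y x, S.H (t y x) (t y (x + 1))
  vertical : ∀ y, (∀ x, ¬ S.final (t y x)) → ∀ x, S.V (t y x) (t (y + 1) x)

/-! ### Every model contains a tiling -/

theorem exists_seq_of_forall_exists {α : Type*} {P : ℕ → α → Prop} {R : ℕ → α → α → Prop}
    (h : ∀ n a, P n a → ∃ b, P (n + 1) b ∧ R n a b) {a : α} (ha : P 0 a) :
    ∃ u : ℕ → α, u 0 = a ∧ ∀ n, P n (u n) ∧ R n (u n) (u (n + 1)) := by
  choose next hnext using h
  let u : ∀ n, {a // P n a} := fun n =>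
    n.rec ⟨a, ha⟩ fun n a => ⟨next n a.1 a.2, (hnext n a.1 a.2).1⟩
  exact ⟨fun n => (u n).1, rfl, fun n => ⟨(u n).2, (hnext n (u n).1 (u n).2).2⟩⟩

section Soundness

variable {S} {n : ℕ} {A : Type} {M : Str A}

theorem BottomRules.exists_joined_right_of_even (hM : BottomRules M) [∀ k, IsTrans A (M.T k)]
    {m : ZMod 4} {a : A} (ha : M.Bottom (2 * m) a) :
    ∃ b, M.Bottom (2 * m + 1) b ∧ M.T 0 a b ∧ M.T 1 b a := by
  obtain ⟨b, hab, hb⟩ := hM.exists_right_of_even m a ha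
  obtain ⟨a', ⟨h0, h1⟩, ha'⟩ := hM.exists_left_of_odd m b hb
  obtain rfl := hM.eq_of_T_zero m a ha a' ⟨ha', trans_of (M.T 0) hab h0⟩
  exact ⟨b, hb, hab, h1⟩

theorem BottomRules.exists_row (hM : BottomRules M) [∀ k, IsTrans A (M.T k)] {a : A}
    (ha : M.Bottom 0 a) :
    ∃ e : ℕ → A, e 0 = a ∧ ∀ x : ℕ, M.Bottom x (e x) ∧
      (Even x → M.T 0 (e x) (e (x + 1)) ∧ M.T 1 (e (x + 1)) (e x)) ∧
      (Odd x → M.T 1 (e x) (e (x + 1))) := by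
  refine exists_seq_of_forall_exists (P := fun x a => M.Bottom (x : ZMod 4) a)
    (R := fun x a b => (Even x → M.T 0 a b ∧ M.T 1 b a) ∧ (Odd x → M.T 1 a b))
    (fun x a ha => ?_) (by simpa using ha)
  obtain ⟨m, rfl | rfl⟩ := x.even_or_odd'
  · obtain ⟨b, hb, hab⟩ := hM.exists_joined_right_of_even (m := m) (by simpa using ha)
    exact ⟨b, by simpa using hb, fun _ => hab, fun hx => absurd hx (by simp)⟩
  · obtain ⟨b, hab, hb⟩ := hM.exists_right_of_odd m a (by simpa using ha)
    exact ⟨b, by simpa [add_assoc, one_add_one_eq_two] using hb, fun hx => absurd hx (by simp),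
      fun _ => hab⟩

/-- The points `e x` form a row of parity `j` of the grid inside `M`, with tiles `t x`. -/
structure IsRow (M : Str A) (j : Fin 2) (e : ℕ → A) (t : ℕ → C) : Prop where
  onGrid : ∀ x : ℕ, M.OnGrid x j (e x)
  hasTile : ∀ x, M.HasTile (t x) (e x)
  left : ∀ m, M.T (j + 1) (e (2 * m + 1)) (e (2 * m))
  right : ∀ m, M.T (j + 1) (e (2 * m + 1)) (e (2 * m + 2))

theorem IsModel.horizontal (hM : S.IsModel n M) {j : Fin 2} {e : ℕ → A} {t : ℕ → C}
    (hgrid : ∀ x : ℕ, M.OnGrid x j (e x)) (htile : ∀ x, M.HasTile (t x) (e x))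
    (hleft : ∀ m, M.T 1 (e (2 * m + 1)) (e (2 * m)))
    (hright : ∀ m, M.T 1 (e (2 * m + 1)) (e (2 * m + 2))) (x : ℕ) : S.H (t x) (t (x + 1)) := by
  have hodd (m : ℕ) : M.OnGrid (2 * m + 1) j (e (2 * m + 1)) := by simpa using hgrid (2 * m + 1)
  obtain ⟨m, rfl | rfl⟩ := x.even_or_odd'
  · obtain ⟨d, hd, hde⟩ := hM.exists_tile_left m j _ _ ⟨hodd m, htile _⟩ _
      ⟨by simpa using hgrid (2 * m), hleft m⟩
    rwa [hM.tile_unique _ _ _ hde (htile _)] at hd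
  · obtain ⟨d, hd, hde⟩ := hM.exists_tile_right m j _ _ ⟨hodd m, htile _⟩ _
      ⟨by simpa using hgrid (2 * m + 2), hright m⟩
    rwa [hM.tile_unique _ _ _ hde (htile _)] at hd

theorem IsModel.hasCounter (hM : S.IsModel n M) {e : ℕ → A} (h0 : M.HasCounter n (e 0))
    (he : ∀ x : ℕ, M.Bottom x (e x) ∧
      (Even x → M.T 0 (e x) (e (x + 1)) ∧ M.T 1 (e (x + 1)) (e x)) ∧
      (Odd x → M.T 1 (e x) (e (x + 1)))) (x : ℕ) : M.HasCounter (n - x) (e x) := by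
  induction x with
  | zero => exact h0
  | succ x ih =>
    refine hM.hasCounter_succ (n - x) (n.sub_le x) x _ ⟨ih, (he x).1⟩ _
      ⟨by simpa using (he (x + 1)).1, ?_⟩
    exact x.even_or_odd.imp (fun hx => ((he x).2.1 hx).1) (he x).2.2

theorem IsModel.exists_first_row (hM : S.IsModel n M) [∀ k, IsTrans A (M.T k)] :
    ∃ e t, IsRow M 0 e t ∧ (∀ x, S.H (t x) (t (x + 1))) ∧ S.corner (t 0) ∧
      ∀ x, S.init (min (n - x) 3) (t x) := by
  obtain ⟨a, ha, hn, c, hc, hca⟩ := hM.exists_origin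
  obtain ⟨e, rfl, he⟩ := hM.toBottomRules.exists_row ha
  choose t hinit htile using fun x =>
    hM.exists_init_tile (n - x) (n.sub_le x) (e x) (hM.hasCounter hn he x)
  have hleft m : M.T 1 (e (2 * m + 1)) (e (2 * m)) := ((he (2 * m)).2.1 (even_two_mul m)).2
  have hright m : M.T 1 (e (2 * m + 1)) (e (2 * m + 2)) :=
    (he (2 * m + 1)).2.2 (odd_two_mul_add_one m)
  refine ⟨e, t, ⟨fun x => (he x).1.1, htile, hleft, hright⟩,
    hM.horizontal (fun x => (he x).1.1) htile hleft hright, ?_, hinit⟩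
  rwa [hM.tile_unique _ _ _ (htile 0) hca]

theorem VerticalRules.exists_joined_above (hM : S.VerticalRules M) [∀ k, IsTrans A (M.T k)]
    {i : ZMod 4} {j : Fin 2} {a : A} (ha : M.OnGrid i j a)
    (hfinal : ¬ ∃ c, S.final c ∧ M.HasTile c a) :
    ∃ b, M.OnGrid i (j + 1) b ∧ M.Raised b ∧ M.T (j + 1) a b ∧ M.T (j + 1) b a := by
  obtain ⟨b, hab, hb, hraised⟩ := hM.exists_above i j a ⟨ha, hfinal⟩
  obtain ⟨a', hba', ha'⟩ := hM.exists_below i j b ⟨hb, hraised⟩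
  obtain rfl := hM.eq_of_T i j a ha a' ⟨ha', trans_of (M.T _) hab hba'⟩
  exact ⟨b, hb, hraised, hab, hba'⟩

theorem HorizontalRules.T_of_T (hM : S.HorizontalRules M) {m : ZMod 4} {j k : Fin 2} {a b : A}
    (ha : M.OnGrid (2 * m + 1) j a) (hb : M.OnGrid (2 * m) j b ∨ M.OnGrid (2 * m + 2) j b)
    (hraised : M.Raised b) (hk : M.T k a b) (l : Fin 2) : M.T l a b := by
  have hsync := hM.sync m j a ha b ⟨hb, hraised⟩
  match k, l with
  | 0, 0 | 1, 1 => exact hk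
  | 0, 1 => exact hsync.1 hk
  | 1, 0 => exact hsync.2 hk

/-- The vertical `T (j + 1)`-edges carry the horizontal ones up to the next row by transitivity,
where they become edges of both relations and may be carried on by `T j`. -/
theorem IsRow.exists_next (hM : S.IsModel n M) [∀ k, IsTrans A (M.T k)] {j : Fin 2}
    {e : ℕ → A} {t : ℕ → C} (h : IsRow M j e t) (hfinal : ∀ x, ¬ S.final (t x)) :
    ∃ e' t', IsRow M (j + 1) e' t' ∧ (∀ x, S.H (t' x) (t' (x + 1))) ∧ ∀ x, S.V (t x) (t' x) := by
  choose e' hgrid hraised hup hdown using fun x : ℕ =>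
    hM.toVerticalRules.exists_joined_above (h.onGrid x) fun ⟨c, hc, hce⟩ =>
      hfinal x (hM.tile_unique _ _ _ hce (h.hasTile x) ▸ hc)
  choose t' hV htile using fun x : ℕ =>
    hM.exists_tile_above x j (t x) (e x) ⟨h.onGrid x, h.hasTile x⟩ (e' x) ⟨hgrid x, hup x⟩
  have hodd (m : ℕ) : M.OnGrid (2 * m + 1) (j + 1) (e' (2 * m + 1)) := by
    simpa using hgrid (2 * m + 1)
  have hleft (m : ℕ) : ∀ k, M.T k (e' (2 * m + 1)) (e' (2 * m)) :=
    hM.toHorizontalRules.T_of_T (hodd m) (.inl (by simpa using hgrid (2 * m))) (hraised _)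
      (trans_of (M.T _) (trans_of (M.T _) (hdown _) (h.left m)) (hup _))
  have hright (m : ℕ) : ∀ k, M.T k (e' (2 * m + 1)) (e' (2 * m + 2)) :=
    hM.toHorizontalRules.T_of_T (hodd m) (.inr (by simpa using hgrid (2 * m + 2))) (hraised _)
      (trans_of (M.T _) (trans_of (M.T _) (hdown _) (h.right m)) (hup _))
  exact ⟨e', t', ⟨hgrid, htile, fun m => hleft m _, fun m => hright m _⟩,
    hM.horizontal hgrid htile (fun m => hleft m 1) fun m => hright m 1, hV⟩

theorem IsModel.exists_isTiling (hM : S.IsModel n M) [∀ k, IsTrans A (M.T k)] :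
    ∃ t, S.IsTiling n t := by
  obtain ⟨e, t, hrow, hH, hcorner, hinit⟩ := hM.exists_first_row
  obtain ⟨u, hu0, hu⟩ := exists_seq_of_forall_exists
    (P := fun _ (r : Fin 2 × (ℕ → A) × (ℕ → C)) =>
      IsRow M r.1 r.2.1 r.2.2 ∧ ∀ x, S.H (r.2.2 x) (r.2.2 (x + 1)))
    (R := fun _ r s => (∀ x, ¬ S.final (r.2.2 x)) → ∀ x, S.V (r.2.2 x) (s.2.2 x))
    (fun _ r hr => by
      by_cases hfinal : ∀ x, ¬ S.final (r.2.2 x)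
      · obtain ⟨e', t', hrow', hH', hV⟩ := hr.1.exists_next hM hfinal
        exact ⟨(r.1 + 1, e', t'), ⟨hrow', hH'⟩, fun _ => hV⟩
      · exact ⟨r, hr, fun h => absurd h hfinal⟩)
    (a := (0, e, t)) ⟨hrow, hH⟩
  exact ⟨fun y => (u y).2.2, by rwa [hu0], by rwa [hu0], fun y => (hu y).1.2, fun y => (hu y).2⟩

theorem exists_isTiling_of_satisfiable (h : Satisfiable (S.formula n)) : ∃ t, S.IsTiling n t := by
  obtain ⟨A, _, M, hT, hM⟩ := h
  have (k : Fin 2) : IsTrans A (M.T k) := ⟨fun _ _ _ h h' => hT k h h'⟩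
  exact ((S.sat_formula M _ n).1 hM).exists_isTiling

end Soundness

/-! ### Ultimately constant tilings yield finite models -/

/-- The column `x'` is adjacent to the odd column `x` when the columns from `4 * w + 4` on are
folded back into those from `4 * w` on with period `4`. -/
def FoldedAdj (w x x' : ℕ) : Prop :=
  x % 2 = 1 ∧ (x' = x + 1 ∨ x' + 1 = x ∨ x = 4 * w + 3 ∧ x' = 4 * w)

/-- The relation `T k` of `foldedGrid` between the points `(x, y)` and `(x', y')`: it lives on the
rows `y`, `y + 1` with `y + k` odd, and on the single bottom row for `k = 0`. -/
def FoldedEdge (w : ℕ) (k : Fin 2) (x y x' y' : ℕ) : Prop :=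
  (y + k + 1) / 2 = (y' + k + 1) / 2 ∧
    (y + k = 0 ∧ x / 2 = x' / 2 ∨ y + k ≠ 0 ∧ (x = x' ∨ FoldedAdj w x x'))

theorem FoldedEdge.trans {w : ℕ} {k : Fin 2} {x y x' y' x'' y'' : ℕ}
    (h : FoldedEdge w k x y x' y') (h' : FoldedEdge w k x' y' x'' y'') :
    FoldedEdge w k x y x'' y'' := by
  unfold FoldedEdge FoldedAdj at *
  omega

/-- The structure that displays the tiles `t y x` with `x < 4 * w + 4` and `y ≤ N`, and a counter
starting with `n`. -/
noncomputable def foldedGrid (n : ℕ) (t : ℕ → ℕ → C) (w N : ℕ) :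
    Str (Fin (4 * w + 4) × Fin (N + 1)) where
  U p a := match p.unpair with
    | (0, ij) => ij = Nat.pair (a.1 % 4) (a.2 % 2)
    | (1, _) => (a.2 : ℕ) ≠ 0
    | (2, q) => (a.2 : ℕ) = 0 ∧ q = n - a.1
    | (3, c) => c = Finite.equivFin C (t a.2 a.1)
    | _ => False
  T k a b := FoldedEdge w k a.1 a.2 b.1 b.2

section FoldedGrid

variable {S} {n : ℕ} {t : ℕ → ℕ → C} {w N : ℕ} {x x' : Fin (4 * w + 4)} {y y' : Fin (N + 1)}

theorem foldedGrid_onGrid {i : ZMod 4} {j : Fin 2} :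
    (foldedGrid n t w N).OnGrid i j (x, y) ↔ i.val = x % 4 ∧ j = (y : ℕ) % 2 := by
  simp [Str.OnGrid, foldedGrid, gridPred, Nat.pair_eq_pair]

theorem foldedGrid_raised : (foldedGrid n t w N).Raised (x, y) ↔ (y : ℕ) ≠ 0 := by
  simp [Str.Raised, foldedGrid, raisedPred]

theorem foldedGrid_bottom {i : ZMod 4} :
    (foldedGrid n t w N).Bottom i (x, y) ↔ i.val = x % 4 ∧ (y : ℕ) = 0 := by
  rw [Str.Bottom, foldedGrid_onGrid, foldedGrid_raised, Fin.val_zero]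
  omega

theorem foldedGrid_hasCounter {q : ℕ} :
    (foldedGrid n t w N).HasCounter q (x, y) ↔ (y : ℕ) = 0 ∧ q = n - x := by
  simp [Str.HasCounter, foldedGrid, counterPred]

theorem foldedGrid_hasTile {c : C} : (foldedGrid n t w N).HasTile c (x, y) ↔ c = t y x := by
  simp [Str.HasTile, foldedGrid, tilePred, Fin.val_inj]

theorem foldedGrid_T {k : Fin 2} :
    (foldedGrid n t w N).T k (x, y) (x', y') ↔ FoldedEdge w k x y x' y' := Iff.rfl

theorem val_two_mul : ∀ m : ZMod 4, (2 * m).val = 2 * m.val % 4 := by decide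

theorem val_add_one : ∀ m : ZMod 4, (m + 1).val = (m.val + 1) % 4 := by decide

theorem val_add_two : ∀ m : ZMod 4, (m + 2).val = (m.val + 2) % 4 := by decide

theorem val_fin_two_add_one : ∀ j : Fin 2, ((j + 1 : Fin 2) : ℕ) = 1 - j := by decide

theorem foldedGrid_bottomRules : BottomRules (foldedGrid n t w N) where
  exists_right_of_even := by
    rintro m ⟨x, y⟩ h
    simp only [foldedGrid_bottom, val_two_mul] at h
    refine ⟨(⟨x + 1, by omega⟩, 0), ?_⟩
    simp only [foldedGrid_bottom, foldedGrid_T, FoldedEdge, FoldedAdj, val_two_mul, val_add_one,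
      Fin.val_zero, and_true, true_or]
    omega
  exists_left_of_odd := by
    rintro m ⟨x, y⟩ h
    simp only [foldedGrid_bottom, val_two_mul, val_add_one] at h
    refine ⟨(⟨x - 1, by omega⟩, 0), ?_⟩
    simp only [foldedGrid_bottom, foldedGrid_T, FoldedEdge, FoldedAdj, val_two_mul, Fin.val_zero,
      Fin.val_one, and_true]
    omega
  eq_of_T_zero := by
    rintro m ⟨x, y⟩ h ⟨x', y'⟩ h'
    simp only [foldedGrid_bottom, foldedGrid_T, FoldedEdge, FoldedAdj, val_two_mul,
      Fin.val_zero] at h h'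
    simp only [Prod.mk.injEq, Fin.ext_iff]
    omega
  exists_right_of_odd := by
    rintro m ⟨x, y⟩ h
    simp only [foldedGrid_bottom, val_two_mul, val_add_one] at h
    by_cases hx : (x : ℕ) = 4 * w + 3
    · refine ⟨(⟨4 * w, by omega⟩, 0), ?_⟩
      simp only [foldedGrid_bottom, foldedGrid_T, FoldedEdge, FoldedAdj, val_two_mul, val_add_two,
        Fin.val_zero, Fin.val_one, and_true]
      omega
    · refine ⟨(⟨x + 1, by omega⟩, 0), ?_⟩
      simp only [foldedGrid_bottom, foldedGrid_T, FoldedEdge, FoldedAdj, val_two_mul, val_add_two,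
        Fin.val_zero, Fin.val_one, and_true, true_or]
      omega

theorem foldedGrid_verticalRules (hfinal : ∀ x, S.final (t N x))
    (hV : ∀ y < N, ∀ x, S.V (t y x) (t (y + 1) x)) : S.VerticalRules (foldedGrid n t w N) where
  exists_above := by
    rintro i j ⟨x, y⟩ ⟨h, hy⟩
    have hyN : (y : ℕ) ≠ N := fun hyN =>
      hy ⟨t y x, by rw [hyN]; exact hfinal x, foldedGrid_hasTile.2 rfl⟩
    rw [foldedGrid_onGrid] at h
    refine ⟨(x, ⟨y + 1, by omega⟩), ?_⟩
    simp only [foldedGrid_onGrid, foldedGrid_raised, foldedGrid_T, FoldedEdge, FoldedAdj,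
      val_fin_two_add_one, and_true, true_or]
    omega
  exists_below := by
    rintro i j ⟨x, y⟩ h
    simp only [foldedGrid_onGrid, foldedGrid_raised, val_fin_two_add_one] at h
    refine ⟨(x, ⟨y - 1, by omega⟩), ?_⟩
    simp only [foldedGrid_onGrid, foldedGrid_T, FoldedEdge, FoldedAdj,
      val_fin_two_add_one, and_true, true_or]
    omega
  eq_of_T := by
    rintro i j ⟨x, y⟩ h ⟨x', y'⟩ h'
    simp only [foldedGrid_onGrid, foldedGrid_T, FoldedEdge, FoldedAdj, val_fin_two_add_one] at h h'
    simp only [Prod.mk.injEq, Fin.ext_iff]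
    omega
  exists_tile_above := by
    rintro i j c ⟨x, y⟩ ⟨h, hc⟩ ⟨x', y'⟩ h'
    obtain rfl := foldedGrid_hasTile.1 hc
    simp only [foldedGrid_onGrid, foldedGrid_T, FoldedEdge, FoldedAdj, val_fin_two_add_one] at h h'
    obtain ⟨hx, hy⟩ : (x' : ℕ) = x ∧ (y' : ℕ) = y + 1 := by omega
    exact ⟨t y' x', by rw [hx, hy]; exact hV y (by omega) x, foldedGrid_hasTile.2 rfl⟩

theorem foldedGrid_horizontalRules (hH : ∀ y x, S.H (t y x) (t y (x + 1)))
    (hfold : ∀ y ≤ N, t y (4 * w + 4) = t y (4 * w)) :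
    S.HorizontalRules (foldedGrid n t w N) where
  sync := by
    rintro m j ⟨x, y⟩ h ⟨x', y'⟩ h'
    simp only [foldedGrid_onGrid, foldedGrid_raised, foldedGrid_T, FoldedEdge, FoldedAdj,
      val_two_mul, val_add_one, val_add_two, Fin.val_zero, Fin.val_one] at h h' ⊢
    omega
  exists_tile_right := by
    rintro m j c ⟨x, y⟩ ⟨h, hc⟩ ⟨x', y'⟩ h'
    obtain rfl := foldedGrid_hasTile.1 hc
    simp only [foldedGrid_onGrid, foldedGrid_T, FoldedEdge, FoldedAdj,
      val_two_mul, val_add_one, val_add_two, Fin.val_one] at h h'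
    obtain ⟨hy, hx | ⟨hx, hx'⟩⟩ : (y' : ℕ) = y ∧
      ((x' : ℕ) = x + 1 ∨ (x : ℕ) = 4 * w + 3 ∧ (x' : ℕ) = 4 * w) := by omega
    · exact ⟨t y' x', by rw [hx, hy]; exact hH y x, foldedGrid_hasTile.2 rfl⟩
    · refine ⟨t y' x', ?_, foldedGrid_hasTile.2 rfl⟩
      rw [hx, hx', hy, ← hfold y (by omega)]
      exact hH y _
  exists_tile_left := by
    rintro m j c ⟨x, y⟩ ⟨h, hc⟩ ⟨x', y'⟩ h'
    obtain rfl := foldedGrid_hasTile.1 hc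
    simp only [foldedGrid_onGrid, foldedGrid_T, FoldedEdge, FoldedAdj,
      val_two_mul, val_add_one, Fin.val_one] at h h'
    obtain ⟨hx, hy⟩ : (x : ℕ) = x' + 1 ∧ (y' : ℕ) = y := by omega
    exact ⟨t y' x', by rw [hx, hy]; exact hH y x', foldedGrid_hasTile.2 rfl⟩

theorem foldedGrid_counterRules (hcorner : S.corner (t 0 0))
    (hinit : ∀ x, S.init (min (n - x) 3) (t 0 x)) (hw : n ≤ 4 * w) :
    S.CounterRules n (foldedGrid n t w N) where
  exists_origin := ⟨(0, 0), by simp [foldedGrid_bottom], by simp [foldedGrid_hasCounter],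
    t 0 0, hcorner, by simp [foldedGrid_hasTile]⟩
  exists_init_tile := by
    rintro q - ⟨x, y⟩ h
    obtain ⟨hy, rfl⟩ := foldedGrid_hasCounter.1 h
    exact ⟨t 0 x, hinit x, foldedGrid_hasTile.2 (by rw [hy])⟩
  hasCounter_succ := by
    rintro q - i ⟨x, y⟩ h ⟨x', y'⟩ h'
    simp only [foldedGrid_hasCounter, foldedGrid_bottom, foldedGrid_T, FoldedEdge, FoldedAdj,
      val_add_one, Fin.val_zero, Fin.val_one] at h h' ⊢
    omega

theorem IsTiling.finitelySatisfiable (ht : S.IsTiling n t) (hfinal : ∀ x, S.final (t N x))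
    (hN : ∀ y < N, ∀ x, ¬ S.final (t y x)) {v : ℕ} (hv : ∀ y ≤ N, ∀ x ≥ v, t y x = t y v) :
    FinitelySatisfiable (S.formula n) := by
  have hfold (y : ℕ) (hy : y ≤ N) : t y (4 * (n + v) + 4) = t y (4 * (n + v)) :=
    (hv y hy _ (by omega)).trans (hv y hy _ (by omega)).symm
  refine ⟨_, inferInstance, inferInstance, foldedGrid n t (n + v) N,
    fun k a b c hab hbc => hab.trans hbc, (S.sat_formula _ _ n).2
    { toBottomRules := foldedGrid_bottomRules
      toVerticalRules := foldedGrid_verticalRules hfinal fun y hy => ht.vertical y (hN y hy)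
      toHorizontalRules := foldedGrid_horizontalRules ht.horizontal hfold
      toCounterRules := foldedGrid_counterRules ht.corner ht.init (by omega)
      tile_unique := ?_ }⟩
  rintro c d ⟨x, y⟩ hc hd
  exact (foldedGrid_hasTile.1 hc).trans (foldedGrid_hasTile.1 hd).symm

end FoldedGrid

end TileSystem

/-! ### Tilings from machines with finitely many stacks -/

/-- An operation on a family of stacks with alphabets `Γ k`. -/
inductive StackOp {K : Type} (Γ : K → Type)
  | nop
  | push (k : K) (a : Γ k)
  | pop (k : K)

/-- A deterministic machine with stacks `Γ k` and states `σ`, which reads the tops of all stacks in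
every step. It halts when it reaches a state with an output. -/
structure StackMachine {K : Type} (Γ : K → Type) (σ : Type) where
  next : σ → (∀ k, Option (Γ k)) → σ
  op : σ → StackOp Γ
  output : σ → Option Bool
  next_of_output : ∀ {q b}, output q = some b → ∀ top, next q top = q

/-- A tile of the space-time diagram of a stack machine. Besides the state it shows the entries of
all stacks at some depth `x` and at the depths `x - 1` (`none` for `x = 0`) and `x + 1`. -/
@[ext] structure StackTile {K : Type} (Γ : K → Type) (σ : Type) where
  state : σ
  left : Option (∀ k, Option (Γ k))
  here : ∀ k, Option (Γ k)
  right : ∀ k, Option (Γ k)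

instance {K : Type} {Γ : K → Type} {σ : Type} [Finite K] [∀ k, Finite (Γ k)] [Finite σ] :
    Finite (StackTile Γ σ) :=
  Finite.of_injective (fun t => (t.state, t.left, t.here, t.right)) fun t t' h => by
    simpa only [StackTile.ext_iff, Prod.mk.injEq] using h

section Cell

variable {K : Type} {Γ : K → Type} {σ : Type}

/-- The entries of the stacks `s` at depth `x`. -/
def cell (s : ∀ k, List (Γ k)) (x : ℕ) : ∀ k, Option (Γ k) := fun k => (s k)[x]?

/-- The entries of the stacks `s` just above depth `x`, if there is room for any. -/
def leftCell (s : ∀ k, List (Γ k)) : ℕ → Option (∀ k, Option (Γ k))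
  | 0 => none
  | x + 1 => some (cell s x)

theorem exists_cell_eq_none [Finite K] (s : ∀ k, List (Γ k)) :
    ∃ v, ∀ x ≥ v, cell s x = fun _ => none := by
  obtain ⟨v, hv⟩ := Set.finite_range (fun k => (s k).length) |>.bddAbove
  exact ⟨v, fun x hx => funext fun k => List.getElem?_eq_none ((hv ⟨k, rfl⟩).trans hx)⟩

/-- The row of tiles showing the configuration `a`. -/
def stackRow (a : σ × ∀ k, List (Γ k)) (x : ℕ) : StackTile Γ σ :=
  ⟨a.1, leftCell a.2 x, cell a.2 x, cell a.2 (x + 1)⟩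

theorem exists_stackRow_eq [Finite K] (a : σ × ∀ k, List (Γ k)) :
    ∃ v, ∀ x ≥ v, stackRow a x = stackRow a v := by
  obtain ⟨v, hv⟩ := exists_cell_eq_none a.2
  have hrow (x : ℕ) (hx : x ≥ v + 1) : stackRow a x = ⟨a.1, some fun _ => none, fun _ => none,
      fun _ => none⟩ := by
    cases x with
    | zero => omega
    | succ x => simp only [stackRow, leftCell, hv x (by omega), hv (x + 1) (by omega),
        hv (x + 1 + 1) (by omega)]
  exact ⟨v + 1, fun x hx => (hrow x hx).trans (hrow _ le_rfl).symm⟩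

variable [DecidableEq K]

namespace StackOp

/-- The effect of an operation on the stacks. -/
def apply : StackOp Γ → (∀ k, List (Γ k)) → ∀ k, List (Γ k)
  | nop, s => s
  | push k a, s => Function.update s k (a :: s k)
  | pop k, s => Function.update s k (s k).tail

/-- The effect of an operation on a cell, depending on its neighbours. -/
def applyCell : StackOp Γ → Option (∀ k, Option (Γ k)) → (∀ k, Option (Γ k)) →
    (∀ k, Option (Γ k)) → ∀ k, Option (Γ k)
  | nop, _, here, _ => here
  | push k a, none, here, _ => Function.update here k (some a)
  | push k _, some left, here, _ => Function.update here k (left k)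
  | pop k, _, here, right => Function.update here k (right k)

theorem cell_apply (o : StackOp Γ) (s : ∀ k, List (Γ k)) (x : ℕ) :
    cell (o.apply s) x = o.applyCell (leftCell s x) (cell s x) (cell s (x + 1)) := by
  cases o with
  | nop => rfl
  | push k a =>
    funext k'
    obtain rfl | hk := eq_or_ne k' k <;> cases x <;> simp [apply, applyCell, cell, leftCell, *]
  | pop k =>
    funext k'
    obtain rfl | hk := eq_or_ne k' k <;> simp [apply, applyCell, cell, *]

end StackOp

end Cell

namespace StackMachine

variable {K : Type} [DecidableEq K] {Γ : K → Type} {σ : Type} (M : StackMachine Γ σ)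

/-- One step of the machine. -/
def step (a : σ × ∀ k, List (Γ k)) : σ × ∀ k, List (Γ k) :=
  (M.next a.1 (cell a.2 0), (M.op a.1).apply a.2)

/-- The machine halts with output `b` when started from `a`. -/
def Outputs (a : σ × ∀ k, List (Γ k)) (b : Bool) : Prop :=
  ∃ N, M.output (M.step^[N] a).1 = some b

/-- The tiling system of the space-time diagrams of a stack machine with initial state `q₀`. The
initial stacks are described by `letter`, and a row in a state with output `false` has no
successor. -/
def tileSystem (q₀ : σ) (letter : ℕ → ∀ k, Option (Γ k)) : TileSystem (StackTile Γ σ) where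
  H a b := b.state = a.state ∧ b.left = some a.here ∧ a.right = b.here
  V a b := M.output a.state ≠ some false ∧
    b.here = (M.op a.state).applyCell a.left a.here a.right ∧
    (a.left = none → b.left = none ∧ b.state = M.next a.state a.here)
  corner a := a.left = none
  final a := M.output a.state = some true
  init q a := a.state = q₀ ∧ a.here = letter q

section Tiling

variable {M} {q₀ : σ} {letter : ℕ → ∀ k, Option (Γ k)} {a : σ × ∀ k, List (Γ k)}

theorem output_iterate_step {b : Bool} (h : M.output a.1 = some b) (N : ℕ) :
    M.output (M.step^[N] a).1 = some b := by
  induction N generalizing a with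
  | zero => exact h
  | succ _ ih => exact ih (by rwa [step, M.next_of_output h])

theorem output_iterate_step_of_le {b : Bool} {y N : ℕ} (h : M.output (M.step^[y] a).1 = some b)
    (hy : y ≤ N) : M.output (M.step^[N] a).1 = some b := by
  rw [← Nat.sub_add_cancel hy, Function.iterate_add_apply]
  exact output_iterate_step h _

theorem Outputs.unique {b b' : Bool} (h : M.Outputs a b) (h' : M.Outputs a b') : b = b' := by
  obtain ⟨N, hN⟩ := h
  obtain ⟨N', hN'⟩ := h'
  exact Option.some_injective _ ((output_iterate_step_of_le hN (le_max_left N N')).symm.trans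
    (output_iterate_step_of_le hN' (le_max_right N N')))

theorem tileSystem_H_stackRow (x : ℕ) :
    (M.tileSystem q₀ letter).H (stackRow a x) (stackRow a (x + 1)) :=
  ⟨rfl, rfl, rfl⟩

theorem tileSystem_V_stackRow (h : M.output a.1 ≠ some false) (x : ℕ) :
    (M.tileSystem q₀ letter).V (stackRow a x) (stackRow (M.step a) x) := by
  refine ⟨h, (M.op a.1).cell_apply a.2 x, fun hx => ?_⟩
  cases x with
  | zero => exact ⟨rfl, rfl⟩
  | succ x => exact absurd hx (Option.some_ne_none _)

theorem eq_stackRow {d : ℕ → StackTile Γ σ} (hleft : (d 0).left = none) (hstate : (d 0).state = a.1)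
    (hhere : ∀ x, (d x).here = cell a.2 x)
    (hH : ∀ x, (M.tileSystem q₀ letter).H (d x) (d (x + 1))) : d = stackRow a := by
  have hstate' (x : ℕ) : (d x).state = a.1 := by
    induction x with
    | zero => exact hstate
    | succ x ih => exact (hH x).1.trans ih
  have hleft' (x : ℕ) : (d x).left = leftCell a.2 x := by
    cases x with
    | zero => exact hleft
    | succ x => exact (hH x).2.1.trans (congrArg some (hhere x))
  funext x
  exact StackTile.ext (hstate' x) (hleft' x) (hhere x) ((hH x).2.2.trans (hhere (x + 1)))

theorem eq_stackRow_step {d : ℕ → StackTile Γ σ}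
    (hV : ∀ x, (M.tileSystem q₀ letter).V (stackRow a x) (d x))
    (hH : ∀ x, (M.tileSystem q₀ letter).H (d x) (d (x + 1))) : d = stackRow (M.step a) :=
  eq_stackRow ((hV 0).2.2 rfl).1 ((hV 0).2.2 rfl).2
    (fun x => (hV x).2.1.trans ((M.op a.1).cell_apply a.2 x).symm) hH

variable {n : ℕ} {s : ∀ k, List (Γ k)}

theorem isTiling_stackRow (hs : ∀ x, cell s x = letter (min (n - x) 3))
    (h : M.Outputs (q₀, s) true) :
    (M.tileSystem q₀ letter).IsTiling n fun y => stackRow (M.step^[y] (q₀, s)) where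
  corner := rfl
  init x := ⟨rfl, hs x⟩
  horizontal _ := tileSystem_H_stackRow
  vertical y _ x := by
    rw [Function.iterate_succ_apply']
    exact tileSystem_V_stackRow (fun hy => Bool.false_ne_true (Outputs.unique ⟨y, hy⟩ h)) x

theorem eq_stackRow_of_isTiling (hs : ∀ x, cell s x = letter (min (n - x) 3))
    {t : ℕ → ℕ → StackTile Γ σ} (ht : (M.tileSystem q₀ letter).IsTiling n t)
    (h : ¬ M.Outputs (q₀, s) true) (y : ℕ) : t y = stackRow (M.step^[y] (q₀, s)) := by
  induction y with
  | zero =>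
    exact eq_stackRow ht.corner (ht.init 0).1 (fun x => (ht.init x).2.trans (hs x).symm)
      (ht.horizontal 0)
  | succ y ih =>
    rw [Function.iterate_succ_apply']
    refine eq_stackRow_step (fun x => ?_) (ht.horizontal (y + 1))
    have hV := ht.vertical y (fun x hx => h ⟨y, by rwa [ih] at hx⟩) x
    rwa [ih] at hV

variable [Finite K] [∀ k, Finite (Γ k)] [Finite σ]

theorem not_satisfiable_formula (hs : ∀ x, cell s x = letter (min (n - x) 3))
    (h : M.Outputs (q₀, s) false) : ¬ Satisfiable ((M.tileSystem q₀ letter).formula n) := by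
  intro hsat
  obtain ⟨t, ht⟩ := TileSystem.exists_isTiling_of_satisfiable hsat
  have h' : ¬ M.Outputs (q₀, s) true := fun h' => Bool.false_ne_true (h.unique h')
  have hrow := eq_stackRow_of_isTiling hs ht h'
  obtain ⟨N, hN⟩ := h
  have hV := ht.vertical N (fun x hx => h' ⟨N, by rwa [hrow] at hx⟩) 0
  rw [hrow] at hV
  exact hV.1 hN

theorem finitelySatisfiable_formula (hs : ∀ x, cell s x = letter (min (n - x) 3))
    (h : M.Outputs (q₀, s) true) :
    FinitelySatisfiable ((M.tileSystem q₀ letter).formula n) := by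
  classical
  choose v hv using fun y => exists_stackRow_eq (M.step^[y] (q₀, s))
  obtain ⟨w, hw⟩ := ((Set.finite_Iic (Nat.find h)).image v).bddAbove
  refine (isTiling_stackRow hs h).finitelySatisfiable (N := Nat.find h) (v := w)
    (fun _ => Nat.find_spec h) (fun y hy _ => Nat.find_min h hy) fun y hy x hx => ?_
  have hvw : v y ≤ w := hw ⟨y, hy, rfl⟩
  exact (hv y x (hvw.trans hx)).trans (hv y w hvw).symm

end Tiling

/-- The restriction of a machine to a set of states that it cannot leave. -/
def restrict (P : Set σ) (hP : ∀ q ∈ P, ∀ top, M.next q top ∈ P) : StackMachine Γ P where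
  next q top := ⟨M.next q top, hP q q.2 top⟩
  op q := M.op q
  output q := M.output q
  next_of_output h top := Subtype.ext (M.next_of_output h top)

theorem restrict_outputs {P : Set σ} {hP : ∀ q ∈ P, ∀ top, M.next q top ∈ P} {q : P}
    {s : ∀ k, List (Γ k)} {b : Bool} :
    (M.restrict P hP).Outputs (q, s) b ↔ M.Outputs (q, s) b := by
  have h : Function.Semiconj (Prod.map Subtype.val id) (M.restrict P hP).step M.step :=
    fun _ => rfl
  refine exists_congr fun N => ?_
  have hN := congrArg Prod.fst ((h.iterate_right N).eq (q, s))
  exact iff_of_eq (congrArg (M.output · = some b) hN)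

end StackMachine

/-! ### Stack machines from Mathlib's `TM2` machines -/

section TM2

open Turing

variable {K : Type} {Γ : K → Type} {Λ σ : Type}

/-- The stack machine that runs the `TM2` machine `M` statement by statement. A state consists of
the statement to be executed next and the internal state of `M`, or of the final output, which is
determined by `accept` from the tops of the stacks at the time when `M` halts. -/
def StackMachine.ofTM2 (M : Λ → TM2.Stmt Γ Λ σ) (accept : (∀ k, Option (Γ k)) → Bool) :
    StackMachine Γ (TM2.Stmt Γ Λ σ × σ ⊕ Bool) where
  next
    | .inl (.push _ _ q, v), _ => .inl (q, v)
    | .inl (.peek k f q, v), top => .inl (q, f v (top k))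
    | .inl (.pop k f q, v), top => .inl (q, f v (top k))
    | .inl (.load f q, v), _ => .inl (q, f v)
    | .inl (.branch f q₁ q₂, v), _ => .inl (cond (f v) q₁ q₂, v)
    | .inl (.goto f, v), _ => .inl (M (f v), v)
    | .inl (.halt, _), top => .inr (accept top)
    | .inr b, _ => .inr b
  op
    | .inl (.push k f _, v) => .push k (f v)
    | .inl (.pop k _ _, _) => .pop k
    | _ => .nop
  output := Sum.elim (fun _ => none) some
  next_of_output {q _} h _ := by
    cases q with
    | inl _ => cases h
    | inr _ => rfl

namespace StackMachine

theorem head?_eq_cell (s : ∀ k, List (Γ k)) (k : K) : (s k).head? = cell s 0 k :=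
  List.head?_eq_getElem?

section Simulation

variable [DecidableEq K]

theorem Outputs.of_step {M : StackMachine Γ σ} {a : σ × ∀ k, List (Γ k)} {b : Bool}
    (h : M.Outputs (M.step a) b) : M.Outputs a b :=
  let ⟨N, hN⟩ := h
  ⟨N + 1, hN⟩

variable (M : Λ → TM2.Stmt Γ Λ σ) (accept : (∀ k, Option (Γ k)) → Bool)

/-- The simulation `ofTM2 M accept` of `M`, started from the given configuration of `M`, halts with
the given output. -/
def CfgOutputs : TM2.Cfg Γ Λ σ → Bool → Prop
  | ⟨some l, v, s⟩, b => (ofTM2 M accept).Outputs (.inl (M l, v), s) b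
  | ⟨none, _, s⟩, b => accept (cell s 0) = b

variable {M accept}

theorem outputs_of_stepAux {q : TM2.Stmt Γ Λ σ} {v : σ} {s : ∀ k, List (Γ k)} {b : Bool}
    (h : CfgOutputs M accept (TM2.stepAux q v s) b) :
    (ofTM2 M accept).Outputs (.inl (q, v), s) b := by
  induction q generalizing v s with
  | halt => exact ⟨1, congrArg some h⟩
  | goto f => exact Outputs.of_step h
  | load f q ih => exact Outputs.of_step (ih h)
  | push k f q ih => exact Outputs.of_step (ih h)
  | peek k f q ih =>
    rw [TM2.stepAux, head?_eq_cell] at h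
    exact Outputs.of_step (ih h)
  | pop k f q ih =>
    rw [TM2.stepAux, head?_eq_cell] at h
    exact Outputs.of_step (ih h)
  | branch f q₁ q₂ ih₁ ih₂ =>
    have hstep : (ofTM2 M accept).step (.inl (.branch f q₁ q₂, v), s) =
        (.inl (cond (f v) q₁ q₂, v), s) := rfl
    refine Outputs.of_step ?_
    rw [hstep]
    rw [TM2.stepAux] at h
    cases hf : f v
    · exact ih₂ (by rwa [hf] at h)
    · exact ih₁ (by rwa [hf] at h)

theorem cfgOutputs_of_mem_step {a a' : TM2.Cfg Γ Λ σ} {b : Bool} (ha : a' ∈ TM2.step M a)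
    (h : CfgOutputs M accept a' b) : CfgOutputs M accept a b := by
  obtain ⟨_ | l, v, s⟩ := a
  · cases ha
  · obtain rfl := Option.some_injective _ ha
    exact outputs_of_stepAux h

theorem outputs_of_mem_eval {l : Λ} {v : σ} {s : ∀ k, List (Γ k)} {a : TM2.Cfg Γ Λ σ}
    (h : a ∈ StateTransition.eval (TM2.step M) ⟨some l, v, s⟩) :
    (ofTM2 M accept).Outputs (.inl (M l, v), s) (accept (cell a.stk 0)) := by
  obtain ⟨hreach, hhalt⟩ := StateTransition.mem_eval.1 h
  obtain ⟨_ | l', v', s'⟩ := a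
  · exact hreach.head_induction_on (motive := fun a _ => CfgOutputs M accept a _) rfl
      fun ha _ => cfgOutputs_of_mem_step ha
  · cases hhalt

end Simulation

/-- The states of `ofTM2 M accept` whose statement is accessible from the labels in `S`. -/
def ofTM2States (M : Λ → TM2.Stmt Γ Λ σ) (S : Finset Λ) : Set (TM2.Stmt Γ Λ σ × σ ⊕ Bool) :=
  {a | a.elim (fun p => some p.1 ∈ TM2.stmts M S) fun _ => True}

instance finite_ofTM2States [Finite σ] (M : Λ → TM2.Stmt Γ Λ σ) (S : Finset Λ) :
    Finite (ofTM2States M S) := by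
  have hfin : {q | some q ∈ TM2.stmts M S}.Finite :=
    (TM2.stmts M S).finite_toSet.preimage (Option.some_injective _).injOn
  refine (((hfin.prod Set.finite_univ).image Sum.inl).union (Set.finite_range Sum.inr)).subset ?_
  rintro (p | b) h
  · exact .inl ⟨p, ⟨h, trivial⟩, rfl⟩
  · exact .inr ⟨b, rfl⟩

theorem some_mem_stmts {M : Λ → TM2.Stmt Γ Λ σ} {S : Finset Λ} {l : Λ} (h : l ∈ S) :
    some (M l) ∈ TM2.stmts M S := by
  classical
  exact Finset.some_mem_insertNone.2 (Finset.mem_biUnion.2 ⟨l, h, TM2.stmts₁_self⟩)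

theorem next_mem_ofTM2States [Inhabited Λ] {M : Λ → TM2.Stmt Γ Λ σ} {S : Finset Λ}
    (hS : TM2.Supports M S) (accept : (∀ k, Option (Γ k)) → Bool)
    {a : TM2.Stmt Γ Λ σ × σ ⊕ Bool} (ha : a ∈ ofTM2States M S) (top : ∀ k, Option (Γ k)) :
    (ofTM2 M accept).next a top ∈ ofTM2States M S := by
  obtain ⟨q, v⟩ | b := a
  · cases q with
    | halt => trivial
    | goto f => exact some_mem_stmts (TM2.stmts_supportsStmt hS ha v)
    | branch f q₁ q₂ =>
      refine TM2.stmts_trans ?_ ha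
      cases f v <;> simp [TM2.stmts₁, TM2.stmts₁_self]
    | _ => exact TM2.stmts_trans (by simp [TM2.stmts₁, TM2.stmts₁_self]) ha
  · trivial

end StackMachine

end TM2

section Code

open Turing Turing.PartrecToTM2 StackMachine

instance : Finite K' :=
  .of_surjective (fun i : Fin 4 => (![.main, .rev, .aux, .stack] : Fin 4 → K') i)
    fun k => by cases k <;> simp [Fin.exists_fin_succ]

theorem exists_posNum_eq_two_pow (n : ℕ) :
    ∃ p : PosNum, (p : ℕ) = 2 ^ n ∧ trPosNum p = List.replicate n .bit0 ++ [.bit1] := by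
  induction n with
  | zero => exact ⟨1, rfl, rfl⟩
  | succ n ih =>
    obtain ⟨p, hp, hp'⟩ := ih
    refine ⟨.bit0 p, ?_, congrArg (Γ'.bit0 :: ·) hp'⟩
    rw [PosNum.cast_bit0, hp, pow_succ, mul_two]

theorem trNat_two_pow (n : ℕ) : trNat (2 ^ n) = List.replicate n .bit0 ++ [.bit1] := by
  obtain ⟨p, hp, hp'⟩ := exists_posNum_eq_two_pow n
  rw [← hp', ← hp, trNat, PosNum.of_to_nat, trNum]

/-- The entries of all stacks in the initial configuration with input `2 ^ n`, as a function of the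
distance `q = n + 2 - x` of the depth `x` from the bottom of the main stack, where values above `3`
are replaced by `3`. -/
def powerLetter (q : ℕ) : K' → Option Γ'
  | .main => match q with
    | 0 => none
    | 1 => some .cons
    | 2 => some .bit1
    | _ => some .bit0
  | _ => none

theorem cell_trList_two_pow (n x : ℕ) :
    cell (K'.elim (trList [2 ^ n]) [] [] []) x = powerLetter (min (n + 2 - x) 3) := by
  funext k
  cases k with
  | main =>
    simp only [cell, K'.elim, trList, trNat_two_pow, List.append_assoc, List.singleton_append]
    obtain hx | hx := lt_or_ge x n
    · rw [List.getElem?_append_left (by simpa using hx), List.getElem?_replicate_of_lt hx,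
        min_eq_right (by omega)]
      rfl
    · obtain ⟨x, rfl⟩ := Nat.exists_eq_add_of_le hx
      rw [List.getElem?_append_right (by simp), List.length_replicate, Nat.add_sub_cancel_left,
        Nat.add_sub_add_left]
      match x with
      | 0 | 1 => rfl
      | x + 2 => simp [powerLetter]
  | _ => rfl

variable (c : ToPartrec.Code)

/-- The output `true` stands for the result `[0]`, whose encoding starts with `cons`. -/
def codeAccept (top : ∀ _ : K', Option Γ') : Bool :=
  top .main = some .cons

/-- The states reachable from the initial state of the stack machine of the code `c`. -/
def codeStates : Set (TM2.Stmt (fun _ : K' => Γ') Λ' (Option Γ') × Option Γ' ⊕ Bool) :=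
  ofTM2States tr (codeSupp c Cont'.halt)

instance : Finite (codeStates c) := finite_ofTM2States tr (codeSupp c Cont'.halt)

/-- The finite-state stack machine evaluating the code `c`. -/
def codeMachine : StackMachine (fun _ : K' => Γ') (codeStates c) :=
  (ofTM2 tr codeAccept).restrict (codeStates c) fun _ =>
    letI : Inhabited Λ' := ⟨trNormal c Cont'.halt⟩
    next_mem_ofTM2States (tr_supports c Cont'.halt) codeAccept

/-- The initial state of `codeMachine c`. -/
def codeStart : codeStates c :=
  ⟨.inl (tr (trNormal c Cont'.halt), none),
    some_mem_stmts (M := tr) (codeSupp_self c .halt (trStmts₁_self _))⟩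

/-- The tiling system of the computations of `c` with inputs `2 ^ n`. -/
def codeSystem : TileSystem (StackTile (fun _ : K' => Γ') (codeStates c)) :=
  (codeMachine c).tileSystem (codeStart c) powerLetter

variable {c}

theorem codeMachine_outputs {l w : List ℕ} (h : w ∈ c.eval l) :
    (codeMachine c).Outputs (codeStart c, K'.elim (trList l) [] [] [])
      (codeAccept (cell (K'.elim (trList w) [] [] []) 0)) := by
  have hw : PartrecToTM2.halt w ∈ StateTransition.eval (TM2.step tr) (init c l) := by
    rw [tr_eval]
    exact Part.mem_map _ h
  exact (restrict_outputs _).2 (outputs_of_mem_eval hw)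

theorem finitelySatisfiable_codeSystem_formula {n : ℕ} (h : [0] ∈ c.eval [2 ^ n]) :
    FinitelySatisfiable ((codeSystem c).formula (n + 2)) :=
  finitelySatisfiable_formula (cell_trList_two_pow n) (codeMachine_outputs h)

theorem not_satisfiable_codeSystem_formula {n : ℕ} (h : [1] ∈ c.eval [2 ^ n]) :
    ¬ Satisfiable ((codeSystem c).formula (n + 2)) :=
  not_satisfiable_formula (cell_trList_two_pow n) (codeMachine_outputs h)

end Code

/-! ### Computability of the formulas of a tiling system -/

/-- A sequence of formulas whose Gödel numbers form a primitive recursive sequence. -/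
def PrimrecSeq {m : ℕ} (φ : ℕ → F m) : Prop :=
  Primrec fun n => encode (φ n)

namespace PrimrecSeq

theorem const {m : ℕ} (φ : F m) : PrimrecSeq fun _ => φ :=
  Primrec.const _

theorem comp {m : ℕ} {φ : ℕ → F m} {f : ℕ → ℕ} (hφ : PrimrecSeq φ) (hf : Primrec f) :
    PrimrecSeq fun n => φ (f n) :=
  Primrec.comp (f := fun n => encode (φ n)) hφ hf

theorem comp_min {m : ℕ} (φ : ℕ → F m) (k : ℕ) : PrimrecSeq fun n => φ (min n k) := by
  have hmin : Primrec fun n : ℕ => (⟨min n k, by omega⟩ : Fin (k + 1)) :=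
    Primrec.fin_val_iff.1 (Primrec.nat_min.comp .id (.const k))
  exact (Primrec.dom_finite fun i : Fin (k + 1) => encode (φ i)).comp hmin

theorem pred {p : ℕ → ℕ} (hp : Primrec p) {m : ℕ} (h1 : 1 ≤ m) (h2 : m ≤ 2) :
    PrimrecSeq fun n => F.pred (p n) h1 h2 :=
  Primrec₂.natPair.comp (.const 0) hp

section

variable {m : ℕ} {φ ψ : ℕ → F m}

theorem and (hφ : PrimrecSeq φ) (hψ : PrimrecSeq ψ) : PrimrecSeq fun n => (φ n).and (ψ n) :=
  Primrec₂.natPair.comp (.const 5) (Primrec₂.natPair.comp hφ hψ)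

theorem imp (hφ : PrimrecSeq φ) (hψ : PrimrecSeq ψ) : PrimrecSeq fun n => (φ n).imp (ψ n) :=
  Primrec₂.natPair.comp (.const 7) (Primrec₂.natPair.comp hφ hψ)

end

theorem ex {m : ℕ} (h : m ≤ 1) {φ : ℕ → F (m + 1)} (hφ : PrimrecSeq φ) :
    PrimrecSeq fun n => .ex h (φ n) :=
  Primrec₂.natPair.comp (.const 8) hφ

theorem all {m : ℕ} (h : m ≤ 1) {φ : ℕ → F (m + 1)} (hφ : PrimrecSeq φ) :
    PrimrecSeq fun n => .all h (φ n) :=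
  Primrec₂.natPair.comp (.const 9) hφ

theorem allAll {P : ℕ → F 1} {Q R : ℕ → F 2} (hP : PrimrecSeq P) (hQ : PrimrecSeq Q)
    (hR : PrimrecSeq R) : PrimrecSeq fun n => .allAll (P n) (Q n) (R n) :=
  (hP.imp ((hQ.imp hR).all _)).all _

theorem conj {m : ℕ} (h : m ≤ 2) {l : List (ℕ → F m)} (hl : ∀ φ ∈ l, PrimrecSeq φ) :
    PrimrecSeq fun n => .conj (l.map (· n)) h := by
  induction l with
  | nil => exact const _
  | cons φ l ih =>
    exact (hl φ List.mem_cons_self).and (ih fun ψ hψ => hl ψ (List.mem_cons_of_mem φ hψ))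

theorem iInf {ι : Type} [Finite ι] {m : ℕ} (h : m ≤ 2) {φ : ι → ℕ → F m}
    (hφ : ∀ i, PrimrecSeq (φ i)) : PrimrecSeq fun n => .iInf (fun i => φ i n) h := by
  let := Fintype.ofFinite ι
  simpa only [F.iInf, List.map_map] using!
    conj h (l := Finset.univ.toList.map φ) (List.forall_mem_map.2 fun i _ => hφ i)

end PrimrecSeq

namespace TileSystem

variable {C : Type} [Finite C] (S : TileSystem C)

theorem primrec_counterPred : Primrec counterPred :=
  Primrec₂.natPair.comp (.const 2) .id

theorem primrecSeq_originFormula : PrimrecSeq S.originFormula :=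
  .ex _ <| .and (.const _) <| .and (.pred primrec_counterPred _ _) (.const _)

theorem primrecSeq_counterRule : PrimrecSeq S.counterRule :=
  .and
    (.all _ <| .imp (.pred primrec_counterPred _ _) (.comp_min (fun q => tileIn (S.init q)) 3))
    (.iInf _ fun _ => .allAll (.and (.pred primrec_counterPred _ _) (.const _)) (.const _)
      (.pred (primrec_counterPred.comp Primrec.pred) _ _))

theorem primrecSeq_counterFormula : PrimrecSeq S.counterFormula := by
  have hrule : Primrec fun n => encode (S.counterRule (n + 1)) :=
    S.primrecSeq_counterRule.comp .succ
  have hstep : Primrec₂ fun n e : ℕ => Nat.pair 5 (Nat.pair (encode (S.counterRule (n + 1))) e) :=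
    Primrec₂.natPair.comp (.const 5) (Primrec₂.natPair.comp (hrule.comp .fst) .snd)
  refine (Primrec.nat_rec₁ (encode (S.counterRule 0)) hstep).of_eq fun n => ?_
  induction n with
  | zero => rfl
  | succ n ih => simp only [ih, counterFormula, encode]

theorem primrecSeq_formula : PrimrecSeq S.formula :=
  .conj _ (l := [S.originFormula, S.counterFormula, fun _ => S.ruleFormula]) <| by
    simpa using ⟨S.primrecSeq_originFormula, S.primrecSeq_counterFormula, .const _⟩

end TileSystem

/-! ### Undecidability -/

theorem exists_code_eval_eq {f : ℕ →. ℕ} (hf : Partrec f) :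
    ∃ c : Turing.ToPartrec.Code, ∀ n, c.eval [n] = pure <$> f n :=
  let ⟨c, hc⟩ := Turing.ToPartrec.Code.exists_code (Nat.Partrec'.part_iff₁.2 hf)
  ⟨c, fun n => hc ⟨[n], rfl⟩⟩

theorem primrec_two_pow : Primrec fun n : ℕ => 2 ^ n := by
  refine (Primrec.nat_rec₁ 1 (Primrec.nat_mul.comp₂ .right (.const 2))).of_eq fun n => ?_
  induction n with
  | zero => rfl
  | succ n ih => rw [pow_succ, ← ih]

theorem exists_primrec_two_pow_eq : ∃ g : ℕ → ℕ, Primrec g ∧ ∀ n, g (2 ^ n) = n := by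
  have hrel : PrimrecRel fun N k : ℕ => 2 ^ k = N :=
    Primrec.eq.comp (primrec_two_pow.comp .snd) .fst
  refine ⟨fun N => N.findGreatest (2 ^ · = N), Primrec.nat_findGreatest .id hrel, fun n => ?_⟩
  exact Nat.pow_right_injective le_rfl <|
    Nat.findGreatest_spec (P := (2 ^ · = 2 ^ n)) Nat.lt_two_pow_self.le rfl

open Nat.Partrec (Code)

theorem exists_code_eval_two_pow :
    ∃ c : Turing.ToPartrec.Code, ∀ n,
      c.eval [2 ^ n] = pure <$> (Denumerable.ofNat Code n).eval n := by
  obtain ⟨g, hg, hgn⟩ := exists_primrec_two_pow_eq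
  have hf : Partrec fun N => (Denumerable.ofNat Code (g N)).eval (g N) :=
    Code.eval_part.comp ((Computable.ofNat _).comp hg.to_comp) hg.to_comp
  obtain ⟨c, hc⟩ := exists_code_eval_eq hf
  exact ⟨c, fun n => by rw [hc, hgn]⟩

theorem not_computable_of_separates {f : ℕ → Bool}
    (h0 : ∀ n, 0 ∈ (Denumerable.ofNat Code n).eval n → f n = true)
    (h1 : ∀ n, 1 ∈ (Denumerable.ofNat Code n).eval n → f n = false) : ¬ Computable f := by
  intro hf
  have hg : Computable fun n => cond (f n) 1 0 := hf.cond (.const 1) (.const 0)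
  obtain ⟨d, hd⟩ := Code.exists_code.1 (Partrec.nat_iff.1 hg.partrec)
  have heval : cond (f (Encodable.encode d)) 1 0 ∈
      (Denumerable.ofNat Code (Encodable.encode d)).eval (Encodable.encode d) := by
    rw [Denumerable.ofNat_encode, hd]
    exact Part.mem_some _
  cases hb : f (Encodable.encode d)
  · exact Bool.false_ne_true (hb.symm.trans (h0 _ (by rwa [hb] at heval)))
  · exact Bool.false_ne_true ((h1 _ (by rwa [hb] at heval)).symm.trans hb)

theorem flutedTwoTransEq_sat_and_finsat_undecidable_general :
    ¬ ∃ f : ℕ → Bool, Computable f ∧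
      (∀ φ : F 0, FinitelySatisfiable φ → f (encode φ) = true) ∧
      ∀ φ : F 0, f (encode φ) = true → Satisfiable φ := by
  rintro ⟨f, hf, hfin, hsat⟩
  obtain ⟨c, hc⟩ := exists_code_eval_two_pow
  have hcode {b n : ℕ} (h : b ∈ (Denumerable.ofNat Code n).eval n) : [b] ∈ c.eval [2 ^ n] := by
    rw [hc]
    exact Part.mem_map _ h
  have hφ : Primrec fun n => encode ((codeSystem c).formula (n + 2)) :=
    (codeSystem c).primrecSeq_formula.comp (Primrec.succ.comp .succ)
  exact not_computable_of_separates
    (fun n h => hfin _ (finitelySatisfiable_codeSystem_formula (hcode h)))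
    (fun n h => eq_false_of_ne_true fun h' =>
      not_satisfiable_codeSystem_formula (hcode h) (hsat _ h'))
    (hf.comp hφ.to_comp)

/-- Theorem 8.  The satisfiability problem and the finite
satisfiability problem for FL² with equality in the presence of two distinguished
transitive relations are both undecidable: no computable function decides, given (the
Gödel number of) such a sentence, whether it has a model (respectively, a finite
model) in which both distinguished relations are transitive. -/
theorem flutedTwoTransEq_sat_and_finsat_undecidable :
    (¬ ∃ f : ℕ → Bool, Computable f ∧
      ∀ φ : F 0, (f (encode φ) = true ↔ Satisfiable φ)) ∧
    (¬ ∃ f : ℕ → Bool, Computable f ∧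
      ∀ φ : F 0, (f (encode φ) = true ↔ FinitelySatisfiable φ)) := by
  constructor
  · rintro ⟨f, hf, h⟩
    exact flutedTwoTransEq_sat_and_finsat_undecidable_general
      ⟨f, hf, fun φ hφ => (h φ).2 hφ.satisfiable, fun φ => (h φ).1⟩
  · rintro ⟨f, hf, h⟩
    exact flutedTwoTransEq_sat_and_finsat_undecidable_general
      ⟨f, hf, fun φ => (h φ).2, fun φ hφ => ((h φ).1 hφ).satisfiable⟩

end FlutedTwoTransEq
end
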